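/- arXiv:2504.08226 — 2 statements merged into one kernel-verified Lean document; each statement's English description precedes it below -/
import Mathlib

section
/- For every δ ∈ (0,1), the map μ ↦ λ₁(μ) + λ₂(μ) is upper semi-continuous on (𝒫^δ_slog(SL_d(𝕂)), W^δ_slog). -/
/-!
Upper semicontinuity holds because `λ₁ + λ₂` is an infimum of functionals that are themselves
upper semicontinuous.

Let `D` be the size of `∧²`, so that `D ‖·‖` is submultiplicative on `D × D` matrices. Since `∧²`
is multiplicative (`wedge2_mul`, the Cauchy–Binet formula for `2 × 2` minors), the quantity
`entW ν n = E_ν[log ‖∧² A_n‖] + log D` is subadditive in `n`. By Fekete's lemma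
`entW ν n / n` tends to `lyap12 ν` and bounds it from above for every `n ≥ 1`
(`tendsto_entW_div`, `lyap12_le_entW_div`). It is therefore enough to show that, for each fixed
`n`, the map `ν ↦ entW ν n` is upper semicontinuous.

For this, two products `A_x = x_n ⋯ x_1` and `A_y = y_n ⋯ y_1` are compared pointwise. Writing
`r_i = ‖x_i - y_i‖`, expanding the product gives
`‖∧² A_x‖ ≤ ‖∧² A_y‖ (1 + Y(y) (R - 1))` with `R = ∏ (1 + r_i)²` and a weight `Y ≥ 1` that depends
only on `y`, is polynomial in the norms of the `y_i`, and takes care of the lower bound on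
`‖∧² A_y‖`. Now `log (1 + Y (R - 1))` is at most `log Y + log R` always, and at most `Y log R` by
Bernoulli's inequality; using the first bound where `log Y > K` and the second elsewhere yields
`logW_le_logW_add`. Integrating it against the `n`-fold power of a coupling of `ν'` and `ν`
(`entW_le_of_coupling`), the first error is a tail `∫_{log Y > K} log Y dν^n`, which is small
for large `K` because `log Y` is `ν^n`-integrable, and the second is a constant times
`∫ log (1 + ‖a - b‖) dη(a, b)`. Because `log (1 + t) ≤ C slog(t)` (`exists_log_le_slog`, from
concavity for small `t` and from the explicit form of `slog` for large `t`), both the required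
integrability and the smallness of the last integral follow from the moment condition and from
convergence in the semi-logarithmic Wasserstein distance.

The exponents being real numbers, the `limsup` in the conclusion also needs a lower bound along the
sequence; it comes from `‖(∧² A_n)⁻¹‖` being polynomially bounded in the norms of the factors.
-/

open MeasureTheory Filter Topology Matrix
open scoped ENNReal

noncomputable section

namespace RMP

/-- The function `log^{p⋆}`: `(p/e)^p · t` for `t < e^p` and `(log t)^p` for `t ≥ e^p`. -/
def logpStar (p t : ℝ) : ℝ :=
  if t < Real.exp p then (p / Real.exp 1) ^ p * t else Real.log t ^ p

/-- A valid choice of semi-logarithm function `slog^δ`: concave and increasing on `[0,∞)`,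
vanishing at `0`, and agreeing with `t ↦ exp((log t)^δ)` for all large `t`. -/
structure IsSlog (δ : ℝ) (s : ℝ → ℝ) : Prop where
  concave : ConcaveOn ℝ (Set.Ici 0) s
  mono : MonotoneOn s (Set.Ici 0)
  zero : s 0 = 0
  eventually_eq : ∃ T : ℝ, ∀ t ≥ T, s t = Real.exp (Real.log t ^ δ)

/-- The infimum of the cost of transporting `μ` to `ν` over all couplings. -/
def transportCost {G : Type*} [MeasurableSpace G] (c : G → G → ℝ)
    (μ ν : Measure G) : ℝ≥0∞ :=
  ⨅ (η : Measure (G × G)) (_ : η.map Prod.fst = μ ∧ η.map Prod.snd = ν),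
    ∫⁻ q, ENNReal.ofReal (c q.1 q.2) ∂η

/-- Sequential compactness of a family of measures with respect to a Wasserstein-type
distance functional `W`; for metric topologies this is equivalent to compactness. -/
def SeqCompactIn {G : Type*} [MeasurableSpace G]
    (W : Measure G → Measure G → ℝ≥0∞) (K : Set (Measure G)) : Prop :=
  ∀ u : ℕ → Measure G, (∀ n, u n ∈ K) →
    ∃ μ ∈ K, ∃ φ : ℕ → ℕ, StrictMono φ ∧
      Tendsto (fun k => W (u (φ k)) μ) atTop (nhds 0)

variable {𝕂 : Type*} [NontriviallyNormedField 𝕂] {d : ℕ}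

attribute [local instance] Matrix.normedAddCommGroup

local instance slTop : TopologicalSpace (SpecialLinearGroup (Fin d) 𝕂) :=
  inferInstanceAs (TopologicalSpace {A : Matrix (Fin d) (Fin d) 𝕂 // A.det = 1})

local instance matMS {ι : Type*} [Fintype ι] : MeasurableSpace (Matrix ι ι 𝕂) := borel _
local instance slMS : MeasurableSpace (SpecialLinearGroup (Fin d) 𝕂) := borel _

/-- The (topological) support of a measure. -/
def msupport {G : Type*} [TopologicalSpace G] [MeasurableSpace G] (μ : Measure G) : Set G :=
  {g | ∀ U : Set G, IsOpen U → g ∈ U → μ U ≠ 0}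

/-- `μ` is strongly irreducible: no finite union of nontrivial proper subspaces of `𝕂^d`
is invariant under every element of the group generated by the support of `μ`. -/
def StronglyIrreducible (μ : Measure (SpecialLinearGroup (Fin d) 𝕂)) : Prop :=
  ¬ ∃ S : Finset (Submodule 𝕂 (Fin d → 𝕂)), S.Nonempty ∧
      (∀ V ∈ S, V ≠ ⊥ ∧ V ≠ ⊤) ∧
      ∀ g ∈ Subgroup.closure (msupport μ),
        ∀ v ∈ ⋃ V ∈ S, (V : Set (Fin d → 𝕂)),
          (g : Matrix (Fin d) (Fin d) 𝕂).mulVec v ∈ ⋃ V ∈ S, (V : Set (Fin d → 𝕂))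

/-- `μ` is contracting: the group generated by its support contains a sequence which,
after normalization by scalars, converges to a rank one matrix. -/
def Contracting (μ : Measure (SpecialLinearGroup (Fin d) 𝕂)) : Prop :=
  ∃ g : ℕ → SpecialLinearGroup (Fin d) 𝕂,
    (∀ n, g n ∈ Subgroup.closure (msupport μ)) ∧
    ∃ (c : ℕ → 𝕂) (L : Matrix (Fin d) (Fin d) 𝕂), L.rank = 1 ∧
      Tendsto (fun n => ‖c n • ((g n : Matrix (Fin d) (Fin d) 𝕂)) - L‖) atTop (nhds 0)

/-- The product `M_n ⋯ M_1` of the random matrices, as a function of `(M_1, …, M_n)`. -/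
def prodTM {n : ℕ} (ω : Fin n → SpecialLinearGroup (Fin d) 𝕂) :
    SpecialLinearGroup (Fin d) 𝕂 :=
  (List.ofFn ω).reverse.prod

/-- The top Lyapunov exponent `λ₁(μ) = lim (1/n) E[log ‖A_n^μ‖]`. -/
def lyap1 (μ : Measure (SpecialLinearGroup (Fin d) 𝕂)) : ℝ :=
  limsup (fun n : ℕ =>
    (n : ℝ)⁻¹ * ∫ ω, Real.log ‖((prodTM ω : SpecialLinearGroup (Fin d) 𝕂) :
        Matrix (Fin d) (Fin d) 𝕂)‖ ∂(Measure.pi fun _ : Fin n => μ)) atTop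

/-- The index type of size `d(d-1)/2` for the second exterior power. -/
abbrev PairIdx (d : ℕ) := {q : Fin d × Fin d // q.1 < q.2}

/-- The second exterior power (second compound matrix) of a matrix, as a matrix indexed by
the `d(d-1)/2` increasing pairs; its entries are the `2 × 2` minors. -/
def wedge2 (M : Matrix (Fin d) (Fin d) 𝕂) : Matrix (PairIdx d) (PairIdx d) 𝕂 :=
  fun p q => M p.1.1 q.1.1 * M p.1.2 q.1.2 - M p.1.1 q.1.2 * M p.1.2 q.1.1

/-- The sum of the two top Lyapunov exponents,
`λ₁(μ) + λ₂(μ) = lim (1/n) E[log ‖∧² A_n^μ‖]`. -/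
def lyap12 (μ : Measure (SpecialLinearGroup (Fin d) 𝕂)) : ℝ :=
  limsup (fun n : ℕ =>
    (n : ℝ)⁻¹ * ∫ ω, Real.log ‖wedge2 (((prodTM ω : SpecialLinearGroup (Fin d) 𝕂) :
        Matrix (Fin d) (Fin d) 𝕂))‖ ∂(Measure.pi fun _ : Fin n => μ)) atTop

/-- The second Lyapunov exponent. -/
def lyap2 (μ : Measure (SpecialLinearGroup (Fin d) 𝕂)) : ℝ := lyap12 μ - lyap1 μ

/-- Membership in `𝒫^p_log(SL_d(𝕂))`. -/
def MemPlog (p : ℝ) (μ : Measure (SpecialLinearGroup (Fin d) 𝕂)) : Prop :=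
  IsProbabilityMeasure μ ∧
    ∫⁻ M, ENNReal.ofReal (logpStar p ‖(M : Matrix (Fin d) (Fin d) 𝕂)‖) ∂μ < ⊤

/-- The logarithmic Wasserstein distance `W^p_log`. -/
def Wlog (p : ℝ) (μ ν : Measure (SpecialLinearGroup (Fin d) 𝕂)) : ℝ≥0∞ :=
  transportCost (fun A B : SpecialLinearGroup (Fin d) 𝕂 =>
    logpStar p ‖((A : Matrix (Fin d) (Fin d) 𝕂)) - (B : Matrix (Fin d) (Fin d) 𝕂)‖) μ ν

/-- Membership in `𝒫^δ_slog(SL_d(𝕂))`, for a given semi-logarithm function `s = slog^δ`. -/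
def MemPslog (s : ℝ → ℝ) (μ : Measure (SpecialLinearGroup (Fin d) 𝕂)) : Prop :=
  IsProbabilityMeasure μ ∧
    ∫⁻ M, ENNReal.ofReal (s ‖(M : Matrix (Fin d) (Fin d) 𝕂)‖) ∂μ < ⊤

/-- The semi-logarithmic Wasserstein distance `W^δ_slog` associated to `s = slog^δ`. -/
def Wslog (s : ℝ → ℝ) (μ ν : Measure (SpecialLinearGroup (Fin d) 𝕂)) : ℝ≥0∞ :=
  transportCost (fun A B : SpecialLinearGroup (Fin d) 𝕂 =>
    s ‖((A : Matrix (Fin d) (Fin d) 𝕂)) - (B : Matrix (Fin d) (Fin d) 𝕂)‖) μ ν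

/-- Membership in `𝒫^α(SL_d(𝕂))`: a finite moment of order `α`. -/
def MemPalpha (α : ℝ) (μ : Measure (SpecialLinearGroup (Fin d) 𝕂)) : Prop :=
  IsProbabilityMeasure μ ∧
    ∫⁻ M, ENNReal.ofReal (‖(M : Matrix (Fin d) (Fin d) 𝕂)‖ ^ α) ∂μ < ⊤

/-- The Wasserstein-type distance `W^α` (for `α ≥ 1` one takes the `1/α`-th power of the
infimal cost). -/
def Walpha (α : ℝ) (μ ν : Measure (SpecialLinearGroup (Fin d) 𝕂)) : ℝ≥0∞ :=
  (transportCost (fun A B : SpecialLinearGroup (Fin d) 𝕂 =>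
    ‖((A : Matrix (Fin d) (Fin d) 𝕂)) - (B : Matrix (Fin d) (Fin d) 𝕂)‖ ^ α) μ ν) ^
      (1 / max α 1)

/-- Membership in `𝒫^p_log` for measures on a matrix space. -/
def MemPlogMat {ι : Type*} [Fintype ι] (p : ℝ) (μ : Measure (Matrix ι ι 𝕂)) : Prop :=
  IsProbabilityMeasure μ ∧ ∫⁻ M, ENNReal.ofReal (logpStar p ‖M‖) ∂μ < ⊤

/-- The logarithmic Wasserstein distance `W^p_log` on measures on a matrix space. -/
def WlogMat {ι : Type*} [Fintype ι] (p : ℝ) (μ ν : Measure (Matrix ι ι 𝕂)) : ℝ≥0∞ :=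
  transportCost (fun A B => logpStar p ‖A - B‖) μ ν

/-- The pushforward of a measure on `SL_d(𝕂)` under the second exterior power. -/
def wedgePush (μ : Measure (SpecialLinearGroup (Fin d) 𝕂)) :
    Measure (Matrix (PairIdx d) (PairIdx d) 𝕂) :=
  μ.map fun g : SpecialLinearGroup (Fin d) 𝕂 => wedge2 ((g : SpecialLinearGroup (Fin d) 𝕂) : Matrix (Fin d) (Fin d) 𝕂)

/-- `σ ≥ 0` is the standard deviation in the Benoist–Quint central limit theorem for `μ`:
`(log‖A_n^μ‖ - n λ₁(μ))/√n` converges in distribution to `N(0, σ²)`. -/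
def IsCLTStdDev (μ : Measure (SpecialLinearGroup (Fin d) 𝕂)) (σ : ℝ) : Prop :=
  0 ≤ σ ∧ ∀ f : ℝ → ℝ, Continuous f → (∃ M, ∀ x, |f x| ≤ M) →
    Tendsto (fun n : ℕ =>
        ∫ ω, f ((Real.log ‖((prodTM ω : SpecialLinearGroup (Fin d) 𝕂) :
            Matrix (Fin d) (Fin d) 𝕂)‖ - (n : ℝ) * lyap1 μ) / Real.sqrt n)
          ∂(Measure.pi fun _ : Fin n => μ)) atTop
      (nhds (∫ x, f x ∂(ProbabilityTheory.gaussianReal 0 (Real.toNNReal (σ ^ 2)))))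



/-! ### Matrix estimates -/

lemma wedge2_mul (A B : Matrix (Fin d) (Fin d) 𝕂) : wedge2 (A * B) = wedge2 A * wedge2 B := by
  ext p q
  obtain ⟨⟨i, j⟩, hij⟩ := p
  obtain ⟨⟨a, b⟩, hab⟩ := q
  let F : Fin d × Fin d → 𝕂 := fun k =>
    A i k.1 * A j k.2 * (B k.1 a * B k.2 b - B k.1 b * B k.2 a)
  have h1 : wedge2 (A * B) ⟨(i, j), hij⟩ ⟨(a, b), hab⟩ = ∑ k, F k := by
    simp only [wedge2, Matrix.mul_apply, F, Finset.sum_mul_sum, Fintype.sum_prod_type,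
      ← Finset.sum_sub_distrib]
    refine Finset.sum_congr rfl fun k _ => Finset.sum_congr rfl fun l _ => ?_
    ring
  -- `F` vanishes on the diagonal, so the sum splits into the two off-diagonal halves.
  have h2 : ∀ k, F k = (if k.1 < k.2 then F k else 0) + (if k.2 < k.1 then F k else 0) := by
    rintro ⟨k, l⟩
    rcases lt_trichotomy k l with h | h | h
    · simp [h, h.not_gt]
    · subst h; simp [F]; right; ring
    · simp [h, h.not_gt]
  have h3 : ∑ k : Fin d × Fin d, (if k.2 < k.1 then F k else 0)
      = ∑ k : Fin d × Fin d, (if k.1 < k.2 then F k.swap else 0) :=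
    (Equiv.sum_comp (Equiv.prodComm (Fin d) (Fin d))
      (fun k => if k.2 < k.1 then F k else 0)).symm
  rw [h1, Finset.sum_congr rfl fun k _ => h2 k, Finset.sum_add_distrib, h3,
    ← Finset.sum_add_distrib, Matrix.mul_apply]
  have h4 : ∀ k : Fin d × Fin d, ((if k.1 < k.2 then F k else 0) +
      (if k.1 < k.2 then F k.swap else 0)) = if k.1 < k.2 then F k + F k.swap else 0 := by
    intro k; split_ifs <;> simp
  rw [Finset.sum_congr rfl fun k _ => h4 k, ← Finset.sum_filter,
    ← Finset.sum_subtype_eq_sum_filter]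
  simp only [Finset.subtype_univ]
  refine Finset.sum_congr rfl fun k _ => ?_
  obtain ⟨⟨k, l⟩, hkl⟩ := k
  simp only [F, wedge2, Prod.swap]
  ring

lemma wedge2_one : wedge2 (1 : Matrix (Fin d) (Fin d) 𝕂) = 1 := by
  ext ⟨⟨i, j⟩, hij⟩ ⟨⟨a, b⟩, hab⟩
  simp only [wedge2, Matrix.one_apply, Subtype.mk.injEq, Prod.mk.injEq]
  change i < j at hij
  change a < b at hab
  by_cases h1 : i = a <;> by_cases h2 : j = b <;> by_cases h3 : i = b <;> by_cases h4 : j = a <;>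
    simp_all
  all_goals omega

/-- The entrywise maximum norm scaled by the size of the matrix, which makes it
submultiplicative. -/
def sz {ι : Type*} [Fintype ι] (A : Matrix ι ι 𝕂) : ℝ := Fintype.card ι * ‖A‖

section sz
variable {ι : Type*} [Fintype ι]

lemma sz_nonneg (A : Matrix ι ι 𝕂) : 0 ≤ sz A := by unfold sz; positivity

lemma sz_add_le (A B : Matrix ι ι 𝕂) : sz (A + B) ≤ sz A + sz B := by
  unfold sz
  rw [← mul_add]
  gcongr
  exact norm_add_le A B

lemma sz_mul_le (A B : Matrix ι ι 𝕂) : sz (A * B) ≤ sz A * sz B := by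
  have h : ‖A * B‖ ≤ Fintype.card ι * (‖A‖ * ‖B‖) := by
    rw [Matrix.norm_le_iff (by positivity)]
    intro i j
    rw [Matrix.mul_apply]
    refine (norm_sum_le _ _).trans ?_
    calc ∑ k, ‖A i k * B k j‖ ≤ ∑ _k : ι, ‖A‖ * ‖B‖ := by
          refine Finset.sum_le_sum fun k _ => (norm_mul_le _ _).trans ?_
          gcongr <;> exact Matrix.norm_entry_le_entrywise_sup_norm _
      _ = _ := by simp
  unfold sz
  calc (Fintype.card ι : ℝ) * ‖A * B‖ ≤ Fintype.card ι * (Fintype.card ι * (‖A‖ * ‖B‖)) := by gcongr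
    _ = _ := by ring

end sz

lemma nonempty_pairIdx (hd : 2 ≤ d) : Nonempty (PairIdx d) :=
  ⟨⟨(⟨0, by omega⟩, ⟨1, by omega⟩), by simp [Fin.lt_def]⟩⟩

lemma norm_minor_sub_le {a b a' b' : 𝕂} {β r : ℝ} (ha' : ‖a'‖ ≤ β) (hb' : ‖b'‖ ≤ β)
    (ha : ‖a - a'‖ ≤ r) (hb : ‖b - b'‖ ≤ r) : ‖a * b - a' * b'‖ ≤ 2 * β * r + r ^ 2 := by
  have : a * b - a' * b' = (a - a') * (b - b') + (a - a') * b' + a' * (b - b') := by ring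
  rw [this]
  have hr : 0 ≤ r := (norm_nonneg _).trans ha
  have hβ : 0 ≤ β := (norm_nonneg _).trans ha'
  calc _ ≤ ‖a - a'‖ * ‖b - b'‖ + ‖a - a'‖ * ‖b'‖ + ‖a'‖ * ‖b - b'‖ := by
        refine (norm_add₃_le).trans ?_
        simp only [norm_mul, le_refl]
    _ ≤ r * r + r * β + β * r := by gcongr
    _ = _ := by ring

lemma norm_wedge2_sub_le (A B : Matrix (Fin d) (Fin d) 𝕂) :
    ‖wedge2 A - wedge2 B‖ ≤ 2 * (1 + ‖B‖) ^ 2 * ((1 + ‖A - B‖) ^ 2 - 1) := by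
  have hr := norm_nonneg (A - B)
  have hβ := norm_nonneg B
  have key : ‖wedge2 A - wedge2 B‖ ≤ 2 * (2 * ‖B‖ * ‖A - B‖ + ‖A - B‖ ^ 2) := by
    rw [Matrix.norm_le_iff (by positivity)]
    intro p q
    have e : ∀ i j, ‖B i j‖ ≤ ‖B‖ := fun i j => Matrix.norm_entry_le_entrywise_sup_norm _
    have e' : ∀ i j, ‖A i j - B i j‖ ≤ ‖A - B‖ := fun i j =>
      Matrix.norm_entry_le_entrywise_sup_norm (A - B)
    have h1 := norm_minor_sub_le (e p.1.1 q.1.1) (e p.1.2 q.1.2) (e' p.1.1 q.1.1) (e' p.1.2 q.1.2)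
    have h2 := norm_minor_sub_le (e p.1.1 q.1.2) (e p.1.2 q.1.1) (e' p.1.1 q.1.2) (e' p.1.2 q.1.1)
    have : (wedge2 A - wedge2 B) p q =
        (A p.1.1 q.1.1 * A p.1.2 q.1.2 - B p.1.1 q.1.1 * B p.1.2 q.1.2) -
        (A p.1.1 q.1.2 * A p.1.2 q.1.1 - B p.1.1 q.1.2 * B p.1.2 q.1.1) := by
      simp only [wedge2, Matrix.sub_apply]; ring
    rw [this]
    refine (norm_sub_le _ _).trans ?_
    linarith
  refine key.trans ?_
  have : 0 ≤ ‖B‖ * ‖A - B‖ ^ 2 := by positivity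
  have : 0 ≤ ‖B‖ ^ 2 * ‖A - B‖ ^ 2 := by positivity
  have : 0 ≤ ‖B‖ ^ 2 * ‖A - B‖ := by positivity
  have : 0 ≤ ‖B‖ * ‖A - B‖ := by positivity
  nlinarith

lemma norm_wedge2_le (A : Matrix (Fin d) (Fin d) 𝕂) : ‖wedge2 A‖ ≤ 2 * (1 + ‖A‖) ^ 2 := by
  have h := norm_wedge2_sub_le A 0
  have h0 : wedge2 (0 : Matrix (Fin d) (Fin d) 𝕂) = 0 := by
    ext; simp [wedge2]
  rw [h0, sub_zero, sub_zero, norm_zero] at h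
  linarith

lemma norm_adjugate_le (A : Matrix (Fin d) (Fin d) 𝕂) :
    ‖A.adjugate‖ ≤ d.factorial * (1 + ‖A‖) ^ d := by
  have hA := norm_nonneg A
  rw [Matrix.norm_le_iff (by positivity)]
  intro i j
  rw [Matrix.adjugate_apply]
  have h := Matrix.det_le (A := A.updateRow j (Pi.single i 1))
    (abv := NormedField.toAbsoluteValue 𝕂) (x := 1 + ‖A‖) (fun k l => by
      change ‖_‖ ≤ _
      rw [Matrix.updateRow_apply]
      split_ifs
      · by_cases hli : l = i
        · subst hli; simp
        · simp [hli]; positivity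
      · have := Matrix.norm_entry_le_entrywise_sup_norm A (i := k) (j := l)
        linarith)
  change ‖_‖ ≤ _ at h
  simpa using h

variable (𝕂 d) in
/-- A polynomial weight in `‖g‖` dominating the (scaled) norms of `∧² g` and `∧² g⁻¹`, and
the Lipschitz constant of `∧²` near `g`. -/
def wt (g : SpecialLinearGroup (Fin d) 𝕂) : ℝ :=
  (1 + Fintype.card (PairIdx d)) * 2 * (2 * d.factorial) ^ 2 *
    (1 + ‖(g : Matrix (Fin d) (Fin d) 𝕂)‖) ^ (2 * d)

lemma two_mul_sq_le_wt (hd : 2 ≤ d) (g : SpecialLinearGroup (Fin d) 𝕂) :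
    Fintype.card (PairIdx d) * (2 * (1 + ‖(g : Matrix (Fin d) (Fin d) 𝕂)‖) ^ 2) ≤ wt 𝕂 d g := by
  have hf : (1 : ℝ) ≤ d.factorial := by exact_mod_cast d.factorial_pos
  have hg := norm_nonneg (g : Matrix (Fin d) (Fin d) 𝕂)
  have hp : (1 + ‖(g : Matrix (Fin d) (Fin d) 𝕂)‖) ^ 2
      ≤ (1 + ‖(g : Matrix (Fin d) (Fin d) 𝕂)‖) ^ (2 * d) :=
    pow_le_pow_right₀ (by linarith) (by omega)
  unfold wt
  calc _ ≤ ((1 + Fintype.card (PairIdx d)) * 2 * 1 : ℝ) *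
        (1 + ‖(g : Matrix (Fin d) (Fin d) 𝕂)‖) ^ (2 * d) := by
        rw [← mul_assoc, mul_one]
        gcongr
        linarith
    _ ≤ _ := by
        gcongr
        nlinarith

lemma one_le_wt (g : SpecialLinearGroup (Fin d) 𝕂) : 1 ≤ wt 𝕂 d g := by
  have hf : (1 : ℝ) ≤ d.factorial := by exact_mod_cast d.factorial_pos
  have hg := norm_nonneg (g : Matrix (Fin d) (Fin d) 𝕂)
  have h1 : (1 : ℝ) ≤ (1 + ‖(g : Matrix (Fin d) (Fin d) 𝕂)‖) ^ (2 * d) :=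
    one_le_pow₀ (by linarith)
  have h2 : (1 : ℝ) ≤ (2 * d.factorial) ^ 2 := one_le_pow₀ (by linarith)
  have h3 : (1 : ℝ) ≤ (1 + Fintype.card (PairIdx d)) * 2 := by
    have : (0 : ℝ) ≤ Fintype.card (PairIdx d) := by positivity
    linarith
  exact one_le_mul_of_one_le_of_one_le (one_le_mul_of_one_le_of_one_le h3 h2) h1

lemma wt_pos (g : SpecialLinearGroup (Fin d) 𝕂) : 0 < wt 𝕂 d g :=
  zero_lt_one.trans_le (one_le_wt g)

lemma sz_wedge2_le (hd : 2 ≤ d) (g : SpecialLinearGroup (Fin d) 𝕂) :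
    sz (wedge2 (g : Matrix (Fin d) (Fin d) 𝕂)) ≤ wt 𝕂 d g := by
  refine le_trans ?_ (two_mul_sq_le_wt hd g)
  unfold sz
  gcongr
  exact norm_wedge2_le _

lemma sz_wedge2_sub_le (hd : 2 ≤ d) (g h : SpecialLinearGroup (Fin d) 𝕂) :
    sz (wedge2 (g : Matrix (Fin d) (Fin d) 𝕂) - wedge2 (h : Matrix (Fin d) (Fin d) 𝕂)) ≤
      wt 𝕂 d h * ((1 + ‖(g : Matrix (Fin d) (Fin d) 𝕂) - h‖) ^ 2 - 1) := by
  have h1 := norm_wedge2_sub_le (g : Matrix (Fin d) (Fin d) 𝕂) h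
  have h0 : 0 ≤ (1 + ‖(g : Matrix (Fin d) (Fin d) 𝕂) - h‖) ^ 2 - 1 := by
    have := norm_nonneg ((g : Matrix (Fin d) (Fin d) 𝕂) - h)
    nlinarith
  refine le_trans ?_ (mul_le_mul_of_nonneg_right (two_mul_sq_le_wt hd h) h0)
  unfold sz
  rw [mul_assoc]
  gcongr

lemma sz_wedge2_inv_le (g : SpecialLinearGroup (Fin d) 𝕂) :
    sz (wedge2 ((g⁻¹ : SpecialLinearGroup (Fin d) 𝕂) : Matrix (Fin d) (Fin d) 𝕂)) ≤ wt 𝕂 d g := by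
  have h1 := norm_wedge2_le ((g⁻¹ : SpecialLinearGroup (Fin d) 𝕂) : Matrix (Fin d) (Fin d) 𝕂)
  have h2 := norm_adjugate_le (g : Matrix (Fin d) (Fin d) 𝕂)
  rw [← Matrix.SpecialLinearGroup.coe_inv] at h2
  have hf : (1 : ℝ) ≤ d.factorial := by exact_mod_cast d.factorial_pos
  have hg := norm_nonneg (g : Matrix (Fin d) (Fin d) 𝕂)
  have h3 : (1 : ℝ) ≤ (1 + ‖(g : Matrix (Fin d) (Fin d) 𝕂)‖) ^ d := one_le_pow₀ (by linarith)
  have h4 : 1 + ‖((g⁻¹ : SpecialLinearGroup (Fin d) 𝕂) : Matrix (Fin d) (Fin d) 𝕂)‖ ≤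
      2 * d.factorial * (1 + ‖(g : Matrix (Fin d) (Fin d) 𝕂)‖) ^ d := by nlinarith
  unfold sz wt
  calc _ ≤ (Fintype.card (PairIdx d) : ℝ) *
        (2 * (2 * d.factorial * (1 + ‖(g : Matrix (Fin d) (Fin d) 𝕂)‖) ^ d) ^ 2) := by
        gcongr
        exact h1.trans (by gcongr)
    _ = Fintype.card (PairIdx d) * 2 * (2 * d.factorial) ^ 2 *
        (1 + ‖(g : Matrix (Fin d) (Fin d) 𝕂)‖) ^ (2 * d) := by rw [mul_pow, ← pow_mul]; ring
    _ ≤ _ := by gcongr; linarith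

/-! ### Products of matrices -/

/-- `log ‖∧² (M_n ⋯ M_1)‖` as a function of `(M_1, …, M_n)`. -/
def logW {n : ℕ} (ω : Fin n → SpecialLinearGroup (Fin d) 𝕂) : ℝ :=
  Real.log ‖wedge2 ((prodTM ω : SpecialLinearGroup (Fin d) 𝕂) : Matrix (Fin d) (Fin d) 𝕂)‖

lemma prodTM_zero (ω : Fin 0 → SpecialLinearGroup (Fin d) 𝕂) : prodTM ω = 1 := by
  simp [prodTM]

lemma prodTM_succ {n : ℕ} (ω : Fin (n + 1) → SpecialLinearGroup (Fin d) 𝕂) :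
    prodTM ω = prodTM (fun i => ω i.succ) * ω 0 := by
  simp [prodTM, List.ofFn_succ]

lemma prodTM_add {m n : ℕ} (ω : Fin (m + n) → SpecialLinearGroup (Fin d) 𝕂) :
    prodTM ω = prodTM (fun i => ω (Fin.natAdd m i)) * prodTM (fun i => ω (Fin.castAdd n i)) := by
  simp only [prodTM, List.ofFn_add, List.reverse_append, List.prod_append]
  rfl

lemma norm_mul_le_norm_mul_sz {ι : Type*} [Fintype ι] (A B : Matrix ι ι 𝕂) :
    ‖A * B‖ ≤ ‖A‖ * sz B := by
  rcases isEmpty_or_nonempty ι with h | h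
  · have : A * B = 0 := Subsingleton.elim _ _
    rw [this, norm_zero]
    exact mul_nonneg (norm_nonneg _) (sz_nonneg _)
  · have := sz_mul_le A B
    unfold sz at this ⊢
    have hc : (0 : ℝ) < Fintype.card ι := by exact_mod_cast Fintype.card_pos
    refine le_of_mul_le_mul_left ?_ hc
    linarith

lemma norm_mul_le_sz_mul_norm {ι : Type*} [Fintype ι] (A B : Matrix ι ι 𝕂) :
    ‖A * B‖ ≤ sz A * ‖B‖ := by
  refine (norm_mul_le_norm_mul_sz A B).trans_eq ?_
  unfold sz; ring

lemma norm_one_le {ι : Type*} [Fintype ι] [DecidableEq ι] : ‖(1 : Matrix ι ι 𝕂)‖ ≤ 1 := by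
  rw [Matrix.norm_le_iff zero_le_one]
  intro i j
  rw [Matrix.one_apply]
  split_ifs <;> simp

lemma norm_wedge2_prodTM_le (hd : 2 ≤ d) {n : ℕ} (ω : Fin n → SpecialLinearGroup (Fin d) 𝕂) :
    ‖wedge2 ((prodTM ω : SpecialLinearGroup (Fin d) 𝕂) : Matrix (Fin d) (Fin d) 𝕂)‖ ≤
      ∏ i, wt 𝕂 d (ω i) := by
  induction n with
  | zero => simpa [prodTM_zero, wedge2_one] using norm_one_le
  | succ n ih =>
    rw [prodTM_succ, Matrix.SpecialLinearGroup.coe_mul, wedge2_mul, Fin.prod_univ_succ, mul_comm]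
    refine (norm_mul_le_norm_mul_sz _ _).trans ?_
    exact mul_le_mul (ih _) (sz_wedge2_le hd _) (sz_nonneg _)
      (Finset.prod_nonneg fun i _ => (wt_pos _).le)

lemma norm_wedge2_prodTM_inv_le {n : ℕ} (ω : Fin n → SpecialLinearGroup (Fin d) 𝕂) :
    ‖wedge2 (((prodTM ω)⁻¹ : SpecialLinearGroup (Fin d) 𝕂) : Matrix (Fin d) (Fin d) 𝕂)‖ ≤
      ∏ i, wt 𝕂 d (ω i) := by
  induction n with
  | zero => simpa [prodTM_zero, wedge2_one] using norm_one_le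
  | succ n ih =>
    rw [prodTM_succ, _root_.mul_inv_rev, Matrix.SpecialLinearGroup.coe_mul, wedge2_mul,
      Fin.prod_univ_succ]
    refine (norm_mul_le_sz_mul_norm _ _).trans ?_
    exact mul_le_mul (sz_wedge2_inv_le _) (ih _) (norm_nonneg _) (wt_pos _).le

/-- The difference of two products is controlled by a weight depending only on the second one,
times a factor which vanishes when the increments coincide. -/
lemma norm_wedge2_prodTM_sub_le (hd : 2 ≤ d) {n : ℕ}
    (x y : Fin n → SpecialLinearGroup (Fin d) 𝕂) :
    ‖wedge2 ((prodTM x : SpecialLinearGroup (Fin d) 𝕂) : Matrix (Fin d) (Fin d) 𝕂) -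
      wedge2 ((prodTM y : SpecialLinearGroup (Fin d) 𝕂) : Matrix (Fin d) (Fin d) 𝕂)‖ ≤
      (∏ i, wt 𝕂 d (y i)) *
        (∏ i, (1 + ‖(x i : Matrix (Fin d) (Fin d) 𝕂) - y i‖) ^ 2 - 1) := by
  induction n with
  | zero => simp [prodTM_zero]
  | succ n ih =>
    have hP : 0 ≤ ∏ i : Fin n, wt 𝕂 d (y i.succ) := Finset.prod_nonneg fun i _ => (wt_pos _).le
    have h1 := ih (fun i => x i.succ) (fun i => y i.succ)
    have h2 := sz_wedge2_sub_le hd (x 0) (y 0)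
    have h3 := norm_wedge2_prodTM_le hd (fun i => y i.succ)
    have h4 := sz_wedge2_le hd (y 0)
    rw [prodTM_succ, prodTM_succ, Matrix.SpecialLinearGroup.coe_mul,
      Matrix.SpecialLinearGroup.coe_mul, wedge2_mul, wedge2_mul, Fin.prod_univ_succ,
      Fin.prod_univ_succ]
    generalize wedge2 ((prodTM fun i => x i.succ : SpecialLinearGroup (Fin d) 𝕂) :
      Matrix (Fin d) (Fin d) 𝕂) = U at *
    generalize wedge2 ((prodTM fun i => y i.succ : SpecialLinearGroup (Fin d) 𝕂) :
      Matrix (Fin d) (Fin d) 𝕂) = V at *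
    generalize wedge2 (x 0 : Matrix (Fin d) (Fin d) 𝕂) = u at *
    generalize wedge2 (y 0 : Matrix (Fin d) (Fin d) 𝕂) = v at *
    generalize ∏ i : Fin n, (1 + ‖(x i.succ : Matrix (Fin d) (Fin d) 𝕂) - y i.succ‖) ^ 2 = R at *
    generalize (1 + ‖(x 0 : Matrix (Fin d) (Fin d) 𝕂) - y 0‖) ^ 2 = r at *
    generalize ∏ i : Fin n, wt 𝕂 d (y i.succ) = P at *
    generalize wt 𝕂 d (y 0) = p at *
    have e : U * u - V * v = (U - V) * (u - v) + (U - V) * v + V * (u - v) := by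
      noncomm_ring
    rw [e]
    have b1 : ‖(U - V) * (u - v)‖ ≤ (P * (R - 1)) * (p * (r - 1)) :=
      (norm_mul_le_norm_mul_sz _ _).trans
        (mul_le_mul h1 h2 (sz_nonneg _) ((norm_nonneg _).trans h1))
    have b2 : ‖(U - V) * v‖ ≤ (P * (R - 1)) * p :=
      (norm_mul_le_norm_mul_sz _ _).trans
        (mul_le_mul h1 h4 (sz_nonneg _) ((norm_nonneg _).trans h1))
    have b3 : ‖V * (u - v)‖ ≤ P * (p * (r - 1)) :=
      (norm_mul_le_norm_mul_sz _ _).trans (mul_le_mul h3 h2 (sz_nonneg _) hP)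
    calc _ ≤ _ := norm_add₃_le
      _ ≤ (P * (R - 1)) * (p * (r - 1)) + (P * (R - 1)) * p + P * (p * (r - 1)) := by gcongr
      _ = _ := by ring

/-- The size of `∧²`, i.e. the constant making the maximum norm submultiplicative. -/
def dimW (d : ℕ) : ℝ := Fintype.card (PairIdx d)

lemma one_le_dimW (hd : 2 ≤ d) : 1 ≤ dimW d := by
  have := nonempty_pairIdx hd
  unfold dimW
  exact_mod_cast Fintype.card_pos

/-- The invertibility of `∧² (M_n ⋯ M_1)` bounds its norm from below. -/
lemma one_le_dimW_mul (hd : 2 ≤ d) {n : ℕ} (ω : Fin n → SpecialLinearGroup (Fin d) 𝕂) :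
    1 ≤ dimW d * (∏ i, wt 𝕂 d (ω i)) *
      ‖wedge2 ((prodTM ω : SpecialLinearGroup (Fin d) 𝕂) : Matrix (Fin d) (Fin d) 𝕂)‖ := by
  obtain ⟨q⟩ := nonempty_pairIdx hd
  have h1 : (1 : ℝ) ≤ ‖(1 : Matrix (PairIdx d) (PairIdx d) 𝕂)‖ := by
    calc (1 : ℝ) = ‖(1 : Matrix (PairIdx d) (PairIdx d) 𝕂) q q‖ := by simp
      _ ≤ _ := Matrix.norm_entry_le_entrywise_sup_norm _
  have h2 : (1 : Matrix (PairIdx d) (PairIdx d) 𝕂) =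
      wedge2 (((prodTM ω)⁻¹ : SpecialLinearGroup (Fin d) 𝕂) : Matrix (Fin d) (Fin d) 𝕂) *
      wedge2 ((prodTM ω : SpecialLinearGroup (Fin d) 𝕂) : Matrix (Fin d) (Fin d) 𝕂) := by
    rw [← wedge2_mul, ← Matrix.SpecialLinearGroup.coe_mul, inv_mul_cancel,
      Matrix.SpecialLinearGroup.coe_one, wedge2_one]
  rw [h2] at h1
  refine h1.trans ((norm_mul_le_sz_mul_norm _ _).trans ?_)
  unfold sz dimW
  gcongr
  exact norm_wedge2_prodTM_inv_le ω

lemma norm_wedge2_prodTM_pos (hd : 2 ≤ d) {n : ℕ} (ω : Fin n → SpecialLinearGroup (Fin d) 𝕂) :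
    0 < ‖wedge2 ((prodTM ω : SpecialLinearGroup (Fin d) 𝕂) : Matrix (Fin d) (Fin d) 𝕂)‖ := by
  refine (norm_nonneg _).lt_of_ne' fun h => ?_
  have := one_le_dimW_mul hd ω
  rw [h, mul_zero] at this
  linarith

lemma logW_le (hd : 2 ≤ d) {n : ℕ} (ω : Fin n → SpecialLinearGroup (Fin d) 𝕂) :
    logW ω ≤ ∑ i, Real.log (wt 𝕂 d (ω i)) := by
  rw [← Real.log_prod fun i _ => (wt_pos _).ne']
  exact Real.log_le_log (norm_wedge2_prodTM_pos hd ω) (norm_wedge2_prodTM_le hd ω)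

lemma le_logW (hd : 2 ≤ d) {n : ℕ} (ω : Fin n → SpecialLinearGroup (Fin d) 𝕂) :
    -(Real.log (dimW d) + ∑ i, Real.log (wt 𝕂 d (ω i))) ≤ logW ω := by
  have hD : 0 < dimW d := zero_lt_one.trans_le (one_le_dimW hd)
  have hP : 0 < ∏ i, wt 𝕂 d (ω i) := Finset.prod_pos fun i _ => wt_pos _
  rw [← Real.log_prod fun i _ => (wt_pos _).ne', ← Real.log_mul hD.ne' hP.ne', ← Real.log_inv]
  refine Real.log_le_log (by positivity) ?_
  rw [inv_le_iff_one_le_mul₀' (by positivity)]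
  exact one_le_dimW_mul hd ω

lemma logW_add_le (hd : 2 ≤ d) {m n : ℕ} (ω : Fin (m + n) → SpecialLinearGroup (Fin d) 𝕂) :
    logW ω ≤ logW (fun i => ω (Fin.castAdd n i)) + logW (fun i => ω (Fin.natAdd m i)) +
      Real.log (dimW d) := by
  have hD : 0 < dimW d := zero_lt_one.trans_le (one_le_dimW hd)
  have h1 := norm_wedge2_prodTM_pos hd (fun i => ω (Fin.castAdd n i))
  have h2 := norm_wedge2_prodTM_pos hd (fun i => ω (Fin.natAdd m i))
  unfold logW
  rw [← Real.log_mul h1.ne' h2.ne', ← Real.log_mul (by positivity) hD.ne']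
  refine Real.log_le_log (norm_wedge2_prodTM_pos hd ω) ?_
  rw [prodTM_add, Matrix.SpecialLinearGroup.coe_mul, wedge2_mul]
  refine (norm_mul_le_norm_mul_sz _ _).trans_eq ?_
  unfold sz dimW
  ring

/-- The logarithm of the weight comparing two products; it depends only on the second one. -/
def logY {n : ℕ} (y : Fin n → SpecialLinearGroup (Fin d) 𝕂) : ℝ :=
  Real.log (dimW d) + 2 * ∑ i, Real.log (wt 𝕂 d (y i))

/-- The logarithmic distance of two matrices. -/
def logDist (q : SpecialLinearGroup (Fin d) 𝕂 × SpecialLinearGroup (Fin d) 𝕂) : ℝ :=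
  Real.log (1 + ‖(q.1 : Matrix (Fin d) (Fin d) 𝕂) - q.2‖)

lemma logDist_nonneg (q : SpecialLinearGroup (Fin d) 𝕂 × SpecialLinearGroup (Fin d) 𝕂) :
    0 ≤ logDist q :=
  Real.log_nonneg (by linarith [norm_nonneg ((q.1 : Matrix (Fin d) (Fin d) 𝕂) - q.2)])

lemma logY_nonneg (hd : 2 ≤ d) {n : ℕ} (y : Fin n → SpecialLinearGroup (Fin d) 𝕂) :
    0 ≤ logY y := by
  have h1 := Real.log_nonneg (one_le_dimW hd)
  have h2 : 0 ≤ ∑ i, Real.log (wt 𝕂 d (y i)) :=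
    Finset.sum_nonneg fun i _ => Real.log_nonneg (one_le_wt _)
  unfold logY; linarith

/-- For `Y, R ≥ 1`, `log (1 + Y (R - 1))` is at most `log Y + log R`, and at most
`Y log R ≤ exp K * log R` when `log Y ≤ K`; the two cases are combined in one bound. -/
lemma log_one_add_mul_le {Y R : ℝ} (hY : 1 ≤ Y) (hR : 1 ≤ R) (K : ℕ) :
    Real.log (1 + Y * (R - 1)) ≤
      (if (K : ℝ) < Real.log Y then Real.log Y else 0) + (1 + Real.exp K) * Real.log R := by
  have hl := Real.log_nonneg hR
  have hlY := Real.log_nonneg hY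
  have hpos : 0 < 1 + Y * (R - 1) := by nlinarith
  split_ifs with h
  · have : Real.log (1 + Y * (R - 1)) ≤ Real.log (Y * R) := Real.log_le_log hpos (by nlinarith)
    rw [Real.log_mul (by linarith) (by linarith)] at this
    nlinarith [Real.exp_pos K]
  · have hYK : Y ≤ Real.exp K := by
      rw [← Real.exp_log (by linarith : 0 < Y)]
      exact Real.exp_le_exp.2 (not_lt.1 h)
    have hB := one_add_mul_self_le_rpow_one_add (by linarith : -1 ≤ R - 1) hY
    have : Real.log (1 + Y * (R - 1)) ≤ Real.log (R ^ Y) := Real.log_le_log hpos (by simpa using hB)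
    rw [Real.log_rpow (by linarith)] at this
    nlinarith

/-- The basic comparison estimate: the first error term involves only `y`, the second one is
linear in the logarithmic distances. -/
lemma logW_le_logW_add (hd : 2 ≤ d) {n : ℕ} (x y : Fin n → SpecialLinearGroup (Fin d) 𝕂)
    (K : ℕ) :
    logW x ≤ logW y + (if (K : ℝ) < logY y then logY y else 0) +
      (1 + Real.exp K) * ∑ i, 2 * logDist (x i, y i) := by
  have hD : 1 ≤ dimW d := one_le_dimW hd
  have hx := norm_wedge2_prodTM_pos hd x
  have hy := norm_wedge2_prodTM_pos hd y
  have hone := one_le_dimW_mul hd y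
  have hsub := norm_wedge2_prodTM_sub_le hd x y
  have hP : 1 ≤ ∏ i, wt 𝕂 d (y i) := by
    exact Finset.one_le_prod fun i _ => one_le_wt _
  have hR : 1 ≤ ∏ i, (1 + ‖(x i : Matrix (Fin d) (Fin d) 𝕂) - y i‖) ^ 2 :=
    Finset.one_le_prod fun i _ => one_le_pow₀ (by
      linarith [norm_nonneg ((x i : Matrix (Fin d) (Fin d) 𝕂) - y i)])
  have hlogY : Real.log (dimW d * (∏ i, wt 𝕂 d (y i)) ^ 2) = logY y := by
    rw [Real.log_mul (by positivity) (by positivity), Real.log_pow,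
      Real.log_prod fun i _ => (wt_pos _).ne', logY]
    norm_num
  have hlogR : Real.log (∏ i, (1 + ‖(x i : Matrix (Fin d) (Fin d) 𝕂) - y i‖) ^ 2) =
      ∑ i, 2 * logDist (x i, y i) := by
    rw [Real.log_prod fun i _ => by positivity]
    simp [logDist, Real.log_pow]
  have hY : 1 ≤ dimW d * (∏ i, wt 𝕂 d (y i)) ^ 2 :=
    one_le_mul_of_one_le_of_one_le hD (one_le_pow₀ hP)
  have key := log_one_add_mul_le hY hR K
  rw [hlogY, hlogR] at key
  suffices logW x ≤ logW y + Real.log (1 + dimW d * (∏ i, wt 𝕂 d (y i)) ^ 2 *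
      (∏ i, (1 + ‖(x i : Matrix (Fin d) (Fin d) 𝕂) - y i‖) ^ 2 - 1)) by linarith
  unfold logW
  generalize wedge2 ((prodTM x : SpecialLinearGroup (Fin d) 𝕂) : Matrix (Fin d) (Fin d) 𝕂) = U at *
  generalize wedge2 ((prodTM y : SpecialLinearGroup (Fin d) 𝕂) : Matrix (Fin d) (Fin d) 𝕂) = V at *
  generalize ∏ i, (1 + ‖(x i : Matrix (Fin d) (Fin d) 𝕂) - y i‖) ^ 2 = R at *
  generalize ∏ i, wt 𝕂 d (y i) = P at *
  have hR0 : 0 ≤ R - 1 := by linarith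
  rw [← Real.log_mul hy.ne' (by positivity)]
  refine Real.log_le_log hx ?_
  have h1 : ‖U‖ ≤ ‖V‖ + ‖U - V‖ := by
    have := norm_add_le V (U - V)
    simpa using this
  have h2 : P * (R - 1) ≤ (dimW d * P * ‖V‖) * (P * (R - 1)) :=
    le_mul_of_one_le_left (by positivity) hone
  calc ‖U‖ ≤ ‖V‖ + (dimW d * P * ‖V‖) * (P * (R - 1)) := by linarith
    _ = _ := by ring

/-! ### Semi-logarithms dominate logarithms -/

lemma exists_log_le_slog {δ : ℝ} (hδ : δ ∈ Set.Ioo (0 : ℝ) 1) {s : ℝ → ℝ} (hs : IsSlog δ s) :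
    ∃ C : ℝ, 0 < C ∧ ∀ t, 0 ≤ t → Real.log (1 + t) ≤ C * s t := by
  obtain ⟨T, hT⟩ := hs.eventually_eq
  have h1 : ∀ᶠ u : ℝ in atTop, Real.log u ≤ u ^ δ := by
    filter_upwards [(isLittleO_log_rpow_atTop hδ.1).bound one_pos, eventually_ge_atTop 1]
      with u hu hu1
    rw [one_mul, Real.norm_of_nonneg (Real.log_nonneg hu1),
      Real.norm_of_nonneg (by positivity)] at hu
    exact hu
  obtain ⟨T₀, hT₀⟩ := eventually_atTop.1 (Real.tendsto_log_atTop.eventually h1)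
  set T₁ := max (max T T₀) (Real.exp 1) with hT₁
  have hT₁e : Real.exp 1 ≤ T₁ := le_max_right _ _
  have hT₁pos : 0 < T₁ := (Real.exp_pos 1).trans_le hT₁e
  have hsT : ∀ t ≥ T₁, s t = Real.exp (Real.log t ^ δ) := fun t ht =>
    hT t (((le_max_left _ _).trans (le_max_left _ _)).trans ht)
  have hspos : 0 < s T₁ := by rw [hsT _ le_rfl]; exact Real.exp_pos _
  have hs0 : ∀ t, 0 ≤ t → 0 ≤ s t := fun t ht => by
    rw [← hs.zero]; exact hs.mono Set.self_mem_Ici ht ht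
  refine ⟨max 2 (T₁ / s T₁), by positivity, fun t ht => ?_⟩
  rcases le_total t T₁ with h | h
  · -- Below `T₁`, concavity bounds `s` from below by a linear function.
    have hc := hs.concave.2 (Set.self_mem_Ici : (0 : ℝ) ∈ Set.Ici 0) (hT₁pos.le : T₁ ∈ Set.Ici 0)
      (sub_nonneg.2 ((div_le_one hT₁pos).2 h) : 0 ≤ 1 - t / T₁)
      (by positivity : 0 ≤ t / T₁) (by ring)
    simp only [smul_eq_mul, mul_zero, zero_add, hs.zero] at hc
    rw [div_mul_cancel₀ _ hT₁pos.ne'] at hc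
    calc Real.log (1 + t) ≤ t := by
          have := Real.log_le_sub_one_of_pos (by linarith : 0 < 1 + t); linarith
      _ = (T₁ / s T₁) * (t / T₁ * s T₁) := by field_simp
      _ ≤ (T₁ / s T₁) * s t := by gcongr
      _ ≤ _ := by
          gcongr
          · exact hs0 t ht
          · exact le_max_right _ _
  · have hte : Real.exp 1 ≤ t := hT₁e.trans h
    have htpos : 0 < t := hT₁pos.trans_le h
    have ht1 : 1 ≤ t := (Real.one_le_exp zero_le_one).trans hte
    have hlog : 1 ≤ Real.log t := (Real.le_log_iff_exp_le htpos).2 hte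
    have h2 : Real.log t ≤ s t := by
      rw [hsT t h, ← Real.log_le_iff_le_exp (by linarith)]
      exact hT₀ t (((le_max_right _ _).trans (le_max_left _ _)).trans h)
    have hlog2 : Real.log 2 ≤ 1 := by have := Real.log_two_lt_d9; linarith
    calc Real.log (1 + t) ≤ Real.log (2 * t) := Real.log_le_log (by linarith) (by linarith)
      _ = Real.log 2 + Real.log t := Real.log_mul (by norm_num) htpos.ne'
      _ ≤ 2 * Real.log t := by linarith
      _ ≤ 2 * s t := by gcongr
      _ ≤ _ := by
          gcongr
          · exact hs0 t ht
          · exact le_max_left _ _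

/-! ### Measurability and integrability -/

/-- The nonnegative function `f` is integrable, with an explicit bound on its integral, as soon as
it is dominated by `C * g` with `g` of finite upper integral (`g` need not be measurable). -/
lemma integrable_of_le_mul {Ω : Type*} [MeasurableSpace Ω] {ν : Measure Ω} {f g : Ω → ℝ} {C : ℝ}
    (hC : 0 < C) (hf : Measurable f) (hf0 : ∀ x, 0 ≤ f x) (hfg : ∀ x, f x ≤ C * g x)
    (hg : ∫⁻ x, ENNReal.ofReal (g x) ∂ν < ⊤) :
    Integrable f ν ∧ ∫ x, f x ∂ν ≤ C * (∫⁻ x, ENNReal.ofReal (g x) ∂ν).toReal := by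
  have h1 : ∫⁻ x, ENNReal.ofReal (f x) ∂ν ≤
      ENNReal.ofReal C * ∫⁻ x, ENNReal.ofReal (g x) ∂ν := by
    rw [← lintegral_const_mul' _ _ ENNReal.ofReal_ne_top]
    refine lintegral_mono fun x => ?_
    rw [← ENNReal.ofReal_mul hC.le]
    exact ENNReal.ofReal_le_ofReal (hfg x)
  have h2 : ENNReal.ofReal C * ∫⁻ x, ENNReal.ofReal (g x) ∂ν < ⊤ :=
    ENNReal.mul_lt_top ENNReal.ofReal_lt_top hg
  refine ⟨⟨hf.aestronglyMeasurable, ?_⟩, ?_⟩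
  · rw [hasFiniteIntegral_iff_ofReal (ae_of_all _ hf0)]
    exact h1.trans_lt h2
  · rw [integral_eq_lintegral_of_nonneg_ae (ae_of_all _ hf0) hf.aestronglyMeasurable]
    refine (ENNReal.toReal_mono h2.ne h1).trans_eq ?_
    rw [ENNReal.toReal_mul, ENNReal.toReal_ofReal hC.le]

local instance slBorel : BorelSpace (SpecialLinearGroup (Fin d) 𝕂) := ⟨rfl⟩

lemma slSecondCountable [SecondCountableTopology 𝕂] :
    SecondCountableTopology (SpecialLinearGroup (Fin d) 𝕂) := by
  have : SecondCountableTopology (Matrix (Fin d) (Fin d) 𝕂) :=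
    inferInstanceAs (SecondCountableTopology (Fin d → Fin d → 𝕂))
  exact TopologicalSpace.Subtype.secondCountableTopology
    {A : Matrix (Fin d) (Fin d) 𝕂 | A.det = 1}

attribute [local instance] slSecondCountable

lemma continuous_coe_sl :
    Continuous (fun g : SpecialLinearGroup (Fin d) 𝕂 => (g : Matrix (Fin d) (Fin d) 𝕂)) :=
  continuous_subtype_val

/-- The logarithmic size of a matrix. -/
def logSize (g : SpecialLinearGroup (Fin d) 𝕂) : ℝ :=
  Real.log (1 + ‖(g : Matrix (Fin d) (Fin d) 𝕂)‖)

lemma measurable_logSize : Measurable (logSize (𝕂 := 𝕂) (d := d)) :=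
  Real.measurable_log.comp
    ((continuous_const.add continuous_coe_sl.norm).measurable)

lemma measurable_logDist [SecondCountableTopology 𝕂] :
    Measurable (logDist (𝕂 := 𝕂) (d := d)) := by
  have : Continuous (fun q : SpecialLinearGroup (Fin d) 𝕂 × SpecialLinearGroup (Fin d) 𝕂 =>
      1 + ‖(q.1 : Matrix (Fin d) (Fin d) 𝕂) - q.2‖) :=
    continuous_const.add ((continuous_coe_sl.comp continuous_fst).sub
      (continuous_coe_sl.comp continuous_snd)).norm
  exact Real.measurable_log.comp this.measurable

lemma continuous_prodTM {n : ℕ} :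
    Continuous (fun ω : Fin n → SpecialLinearGroup (Fin d) 𝕂 =>
      ((prodTM ω : SpecialLinearGroup (Fin d) 𝕂) : Matrix (Fin d) (Fin d) 𝕂)) := by
  induction n with
  | zero => simpa [prodTM_zero] using continuous_const
  | succ n ih =>
    simp only [prodTM_succ, Matrix.SpecialLinearGroup.coe_mul]
    exact Continuous.matrix_mul
      (ih.comp (continuous_pi fun i : Fin n => continuous_apply i.succ))
      (continuous_coe_sl.comp (continuous_apply 0))

lemma continuous_wedge2 :
    Continuous (wedge2 : Matrix (Fin d) (Fin d) 𝕂 → Matrix (PairIdx d) (PairIdx d) 𝕂) := by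
  refine continuous_pi fun p => continuous_pi fun q => ?_
  have e : ∀ i j, Continuous fun M : Matrix (Fin d) (Fin d) 𝕂 => M i j := fun i j =>
    continuous_id.matrix_elem i j
  exact ((e _ _).mul (e _ _)).sub ((e _ _).mul (e _ _))

lemma measurable_logW [SecondCountableTopology 𝕂] {n : ℕ} :
    Measurable (logW (𝕂 := 𝕂) (d := d) (n := n)) :=
  Real.measurable_log.comp (continuous_wedge2.comp continuous_prodTM).norm.measurable

lemma log_wt_eq (g : SpecialLinearGroup (Fin d) 𝕂) :
    Real.log (wt 𝕂 d g) = Real.log ((1 + Fintype.card (PairIdx d)) * 2 * (2 * d.factorial) ^ 2) +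
      2 * d * logSize g := by
  have hf : (0 : ℝ) < d.factorial := by exact_mod_cast d.factorial_pos
  have hg := norm_nonneg (g : Matrix (Fin d) (Fin d) 𝕂)
  rw [wt, Real.log_mul (by positivity) (by positivity), Real.log_pow, logSize]
  push_cast
  ring

lemma log_wt_nonneg (g : SpecialLinearGroup (Fin d) 𝕂) : 0 ≤ Real.log (wt 𝕂 d g) :=
  Real.log_nonneg (one_le_wt g)

lemma log_wt_le (g h : SpecialLinearGroup (Fin d) 𝕂) :
    Real.log (wt 𝕂 d g) ≤ Real.log (wt 𝕂 d h) + 2 * d * logDist (g, h) := by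
  have h1 : logSize g ≤ logSize h + logDist (g, h) := by
    have hg := norm_nonneg (g : Matrix (Fin d) (Fin d) 𝕂)
    have hh := norm_nonneg (h : Matrix (Fin d) (Fin d) 𝕂)
    have hgh := norm_nonneg ((g : Matrix (Fin d) (Fin d) 𝕂) - h)
    unfold logSize logDist
    rw [← Real.log_mul (by positivity) (by positivity)]
    refine Real.log_le_log (by positivity) ?_
    have := norm_add_le (h : Matrix (Fin d) (Fin d) 𝕂) (g - h)
    rw [add_sub_cancel] at this
    nlinarith
  rw [log_wt_eq, log_wt_eq]
  have : 0 ≤ 2 * (d : ℝ) := by positivity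
  nlinarith

lemma measurable_log_wt : Measurable fun g : SpecialLinearGroup (Fin d) 𝕂 =>
    Real.log (wt 𝕂 d g) := by
  simp only [log_wt_eq]
  exact measurable_const.add (measurable_const.mul measurable_logSize)

variable {ν : Measure (SpecialLinearGroup (Fin d) 𝕂)} [IsProbabilityMeasure ν]

lemma integrable_log_wt (h : Integrable logSize ν) :
    Integrable (fun g => Real.log (wt 𝕂 d g)) ν := by
  simp only [log_wt_eq]
  exact (integrable_const _).add (h.const_mul _)

lemma integrable_log_wt_eval (h : Integrable logSize ν) {n : ℕ} (i : Fin n) :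
    Integrable (fun ω => Real.log (wt 𝕂 d (ω i))) (Measure.pi fun _ : Fin n => ν) :=
  integrable_comp_eval (μ := fun _ : Fin n => ν) (i := i)
    (f := fun g => Real.log (wt 𝕂 d g)) (integrable_log_wt h)

lemma integrable_sum_log_wt (h : Integrable logSize ν) (n : ℕ) :
    Integrable (fun ω => ∑ i, Real.log (wt 𝕂 d (ω i))) (Measure.pi fun _ : Fin n => ν) :=
  integrable_finsetSum _ fun i _ => integrable_log_wt_eval h i

lemma integral_sum_log_wt (h : Integrable logSize ν) (n : ℕ) :
    ∫ ω, ∑ i, Real.log (wt 𝕂 d (ω i)) ∂(Measure.pi fun _ : Fin n => ν) =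
      n * ∫ g, Real.log (wt 𝕂 d g) ∂ν := by
  rw [integral_finsetSum _ fun i _ => integrable_log_wt_eval h i]
  have : ∀ i : Fin n, ∫ ω, Real.log (wt 𝕂 d (ω i)) ∂(Measure.pi fun _ : Fin n => ν) =
      ∫ g, Real.log (wt 𝕂 d g) ∂ν := fun i =>
    integral_comp_eval (μ := fun _ : Fin n => ν) (i := i) (f := fun g => Real.log (wt 𝕂 d g))
      (integrable_log_wt h).aestronglyMeasurable
  simp [this]

lemma integrable_logY (h : Integrable logSize ν) (n : ℕ) :
    Integrable (logY (𝕂 := 𝕂) (d := d) (n := n)) (Measure.pi fun _ : Fin n => ν) :=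
  (integrable_const _).add ((integrable_sum_log_wt h n).const_mul 2)

lemma integrable_logW [SecondCountableTopology 𝕂] (hd : 2 ≤ d) (h : Integrable logSize ν) (n : ℕ) :
    Integrable (logW (𝕂 := 𝕂) (d := d) (n := n)) (Measure.pi fun _ : Fin n => ν) := by
  refine ((integrable_const (Real.log (dimW d))).add (integrable_sum_log_wt h n)).mono'
    measurable_logW.aestronglyMeasurable (ae_of_all _ fun ω => ?_)
  have h1 := logW_le hd ω
  have h2 := le_logW hd ω
  have h3 := Real.log_nonneg (one_le_dimW hd)
  rw [Real.norm_eq_abs, abs_le, Pi.add_apply]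
  constructor <;> linarith

/-! ### Subadditivity and Fekete's lemma -/

lemma pi_map_precomp {m n : ℕ} {e : Fin m → Fin n} (he : e.Injective) :
    (Measure.pi fun _ : Fin n => ν).map (fun ω i => ω (e i)) = Measure.pi fun _ : Fin m => ν := by
  have h1 : ProbabilityTheory.iIndepFun
      (fun (i : Fin m) (ω : Fin n → SpecialLinearGroup (Fin d) 𝕂) => ω (e i))
      (Measure.pi fun _ : Fin n => ν) := (ProbabilityTheory.iIndepFun_pi (μ := fun _ : Fin n => ν)
    (X := fun _ => id) fun _ => aemeasurable_id).precomp he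
  rw [ProbabilityTheory.iIndepFun_iff_map_fun_eq_pi_map
    fun i => (measurable_pi_apply (e i)).aemeasurable] at h1
  refine h1.trans ?_
  congr
  ext1 i
  exact (measurePreserving_eval (fun _ : Fin n => ν) (e i)).map_eq

/-- `E[log ‖∧² A_n‖]`, shifted by a constant so as to be subadditive in `n`. -/
def entW (ν : Measure (SpecialLinearGroup (Fin d) 𝕂)) (n : ℕ) : ℝ :=
  ∫ ω, logW ω ∂(Measure.pi fun _ : Fin n => ν) + Real.log (dimW d)

lemma subadditive_entW [SecondCountableTopology 𝕂] (hd : 2 ≤ d) (h : Integrable logSize ν) :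
    Subadditive (entW ν) := by
  intro m n
  have key : ∀ {l k : ℕ} {e : Fin l → Fin k}, e.Injective →
      Integrable (fun ω => logW fun i => ω (e i)) (Measure.pi fun _ : Fin k => ν) ∧
      ∫ ω, (logW fun i => ω (e i)) ∂(Measure.pi fun _ : Fin k => ν) =
        ∫ ω, logW ω ∂(Measure.pi fun _ : Fin l => ν) := by
    intro l k e he
    have hm : Measurable fun (ω : Fin k → SpecialLinearGroup (Fin d) 𝕂) i => ω (e i) :=
      measurable_pi_lambda _ fun i => measurable_pi_apply _
    have hp : MeasurePreserving (fun (ω : Fin k → SpecialLinearGroup (Fin d) 𝕂) i => ω (e i))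
      (Measure.pi fun _ : Fin k => ν) (Measure.pi fun _ : Fin l => ν) := ⟨hm, pi_map_precomp he⟩
    refine ⟨hp.integrable_comp_of_integrable (integrable_logW hd h l), ?_⟩
    rw [← pi_map_precomp (ν := ν) he,
      integral_map hm.aemeasurable measurable_logW.aestronglyMeasurable]
  obtain ⟨i1, e1⟩ := key (Fin.castAdd_injective m n)
  obtain ⟨i2, e2⟩ := key (Fin.natAdd_injective n m)
  have := integral_mono (integrable_logW hd h (m + n))
    ((i1.add i2).add (integrable_const (Real.log (dimW d)))) fun ω => logW_add_le hd ω
  rw [integral_add' (i1.add i2) (integrable_const _), integral_add' i1 i2, e1, e2] at this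
  simp only [integral_const, probReal_univ, one_smul] at this
  unfold entW
  linarith

lemma le_entW_div [SecondCountableTopology 𝕂] (hd : 2 ≤ d) (h : Integrable logSize ν) (n : ℕ) :
    -∫ g, Real.log (wt 𝕂 d g) ∂ν ≤ entW ν n / n := by
  have h0 : 0 ≤ ∫ g, Real.log (wt 𝕂 d g) ∂ν := integral_nonneg log_wt_nonneg
  rcases n.eq_zero_or_pos with rfl | hn
  · simpa using h0
  · rw [le_div_iff₀ (by exact_mod_cast hn)]
    have := integral_mono (((integrable_const (Real.log (dimW d))).add
      (integrable_sum_log_wt h n)).neg) (integrable_logW hd h n) fun ω => le_logW hd ω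
    rw [integral_neg', integral_add' (integrable_const _) (integrable_sum_log_wt h n),
      integral_sum_log_wt h] at this
    simp only [integral_const, probReal_univ, one_smul] at this
    unfold entW
    linarith

lemma bddBelow_entW [SecondCountableTopology 𝕂] (hd : 2 ≤ d) (h : Integrable logSize ν) :
    BddBelow (Set.range fun n : ℕ => entW ν n / n) :=
  ⟨-∫ g, Real.log (wt 𝕂 d g) ∂ν, by rintro _ ⟨n, rfl⟩; exact le_entW_div hd h n⟩

lemma lyap12_eq_lim [SecondCountableTopology 𝕂] (hd : 2 ≤ d) (h : Integrable logSize ν) :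
    lyap12 ν = (subadditive_entW hd h).lim := by
  have h1 := (subadditive_entW hd h).tendsto_lim (bddBelow_entW hd h)
  have h2 : Tendsto (fun n : ℕ => Real.log (dimW d) / (n : ℝ)) atTop (𝓝 0) :=
    tendsto_const_div_atTop_nhds_zero_nat _
  have h3 := h1.sub h2
  rw [sub_zero] at h3
  refine (h3.congr fun n => ?_).limsup_eq
  change _ = (n : ℝ)⁻¹ * ∫ ω, logW ω ∂(Measure.pi fun _ : Fin n => ν)
  unfold entW
  ring

lemma lyap12_le_entW_div [SecondCountableTopology 𝕂] (hd : 2 ≤ d) (h : Integrable logSize ν)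
    {n : ℕ} (hn : n ≠ 0) : lyap12 ν ≤ entW ν n / n := by
  rw [lyap12_eq_lim hd h]
  exact (subadditive_entW hd h).lim_le_div (bddBelow_entW hd h) hn

lemma tendsto_entW_div [SecondCountableTopology 𝕂] (hd : 2 ≤ d) (h : Integrable logSize ν) :
    Tendsto (fun n : ℕ => entW ν n / n) atTop (𝓝 (lyap12 ν)) := by
  rw [lyap12_eq_lim hd h]
  exact (subadditive_entW hd h).tendsto_lim (bddBelow_entW hd h)

lemma neg_integral_le_lyap12 [SecondCountableTopology 𝕂] (hd : 2 ≤ d)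
    (h : Integrable logSize ν) : -∫ g, Real.log (wt 𝕂 d g) ∂ν ≤ lyap12 ν :=
  ge_of_tendsto' (tendsto_entW_div hd h) fun n => le_entW_div hd h n

/-! ### Couplings and semicontinuity -/

/-- The part of the integral of `logY` over the set where it exceeds `K`. -/
def tailY (ν : Measure (SpecialLinearGroup (Fin d) 𝕂)) (n K : ℕ) : ℝ :=
  ∫ y, (if (K : ℝ) < logY y then logY y else 0) ∂(Measure.pi fun _ : Fin n => ν)

lemma measurable_logY {n : ℕ} : Measurable (logY (𝕂 := 𝕂) (d := d) (n := n)) :=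
  measurable_const.add (measurable_const.mul
    (Finset.measurable_fun_sum _ fun i _ => measurable_log_wt.comp (measurable_pi_apply i)))

lemma measurable_truncY {n : ℕ} (K : ℕ) :
    Measurable fun y : Fin n → SpecialLinearGroup (Fin d) 𝕂 =>
      if (K : ℝ) < logY y then logY y else 0 :=
  Measurable.ite (measurableSet_lt measurable_const measurable_logY) measurable_logY
    measurable_const

lemma norm_truncY_le (hd : 2 ≤ d) {n : ℕ} (K : ℕ)
    (y : Fin n → SpecialLinearGroup (Fin d) 𝕂) :
    ‖if (K : ℝ) < logY y then logY y else 0‖ ≤ logY y := by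
  have := logY_nonneg hd y
  split_ifs
  · rw [Real.norm_of_nonneg this]
  · simpa using this

lemma tendsto_tailY (hd : 2 ≤ d) (h : Integrable logSize ν) (n : ℕ) :
    Tendsto (tailY ν n) atTop (𝓝 0) := by
  have := tendsto_integral_of_dominated_convergence (μ := Measure.pi fun _ : Fin n => ν)
    (F := fun (K : ℕ) y => if (K : ℝ) < logY y then logY y else 0) (f := fun _ => 0) logY
    (fun K => (measurable_truncY K).aestronglyMeasurable) (integrable_logY h n)
    (fun K => ae_of_all _ fun y => norm_truncY_le hd K y)
    (ae_of_all _ fun y => tendsto_const_nhds.congr' ?_)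
  · rw [integral_zero] at this
    exact this
  · obtain ⟨N, hN⟩ := exists_nat_ge (logY y)
    filter_upwards [eventually_ge_atTop N] with K hK
    rw [if_neg]
    exact not_lt.2 (hN.trans (by exact_mod_cast hK))

/-- Integrating the pointwise comparison against the `n`-fold power of a coupling. -/
lemma entW_le_of_coupling [SecondCountableTopology 𝕂] (hd : 2 ≤ d)
    {ν' : Measure (SpecialLinearGroup (Fin d) 𝕂)} [IsProbabilityMeasure ν']
    (h : Integrable logSize ν) (h' : Integrable logSize ν')
    {η : Measure (SpecialLinearGroup (Fin d) 𝕂 × SpecialLinearGroup (Fin d) 𝕂)}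
    [IsProbabilityMeasure η]
    (hη1 : η.map Prod.fst = ν') (hη2 : η.map Prod.snd = ν) (hη : Integrable logDist η)
    (n K : ℕ) :
    entW ν' n ≤ entW ν n + tailY ν n K + (1 + Real.exp K) * (n * (2 * ∫ q, logDist q ∂η)) := by
  let P := Measure.pi fun _ : Fin n => η
  have m1 : MeasurePreserving (fun (ω : Fin n → _ × _) i => (ω i).1) P
      (Measure.pi fun _ : Fin n => ν') :=
    measurePreserving_pi _ _ fun _ => ⟨measurable_fst, hη1⟩
  have m2 : MeasurePreserving (fun (ω : Fin n → _ × _) i => (ω i).2) P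
      (Measure.pi fun _ : Fin n => ν) :=
    measurePreserving_pi _ _ fun _ => ⟨measurable_snd, hη2⟩
  have iT : Integrable (fun y : Fin n → SpecialLinearGroup (Fin d) 𝕂 =>
      if (K : ℝ) < logY y then logY y else 0) (Measure.pi fun _ : Fin n => ν) :=
    (integrable_logY h n).mono' (measurable_truncY K).aestronglyMeasurable
      (ae_of_all _ fun y => norm_truncY_le hd K y)
  have iD : ∀ i : Fin n, Integrable (fun ω => 2 * logDist (ω i)) P := fun i =>
    integrable_comp_eval (μ := fun _ : Fin n => η) (i := i) (f := fun q => 2 * logDist q)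
      (hη.const_mul 2)
  have eD : ∫ ω, ∑ i, 2 * logDist (ω i) ∂P = n * (2 * ∫ q, logDist q ∂η) := by
    rw [integral_finsetSum _ fun i _ => iD i]
    have : ∀ i : Fin n, ∫ ω, 2 * logDist (ω i) ∂P = 2 * ∫ q, logDist q ∂η := fun i => by
      rw [← integral_const_mul]
      exact integral_comp_eval (μ := fun _ : Fin n => η) (i := i) (f := fun q => 2 * logDist q)
        (hη.const_mul 2).aestronglyMeasurable
    simp [this]
  have j1 := m1.integrable_comp_of_integrable (integrable_logW hd h' n)
  have j2 := m2.integrable_comp_of_integrable (integrable_logW hd h n)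
  have j3 := m2.integrable_comp_of_integrable iT
  have j4 := (integrable_finsetSum Finset.univ fun i _ => iD i).const_mul (1 + Real.exp K)
  have key := integral_mono j1 ((j2.add j3).add j4) fun ω =>
    logW_le_logW_add hd (fun i => (ω i).1) (fun i => (ω i).2) K
  rw [integral_add' (j2.add j3) j4, integral_add' j2 j3, integral_const_mul, eD] at key
  have e1 : ∫ ω, logW ω ∂(Measure.pi fun _ : Fin n => ν') =
      ∫ ω, (logW ∘ fun (ω : Fin n → _ × _) i => (ω i).1) ω ∂P := by
    rw [← m1.map_eq, integral_map m1.aemeasurable measurable_logW.aestronglyMeasurable]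
    rfl
  have e2 : ∫ ω, logW ω ∂(Measure.pi fun _ : Fin n => ν) =
      ∫ ω, (logW ∘ fun (ω : Fin n → _ × _) i => (ω i).2) ω ∂P := by
    rw [← m2.map_eq, integral_map m2.aemeasurable measurable_logW.aestronglyMeasurable]
    rfl
  have e3 : tailY ν n K = ∫ ω, ((fun y => if (K : ℝ) < logY y then logY y else 0) ∘
      fun (ω : Fin n → SpecialLinearGroup (Fin d) 𝕂 × _) i => (ω i).2) ω ∂P := by
    rw [tailY, ← m2.map_eq,
      integral_map m2.aemeasurable (measurable_truncY K).aestronglyMeasurable]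
    rfl
  rw [← e1, ← e2, ← e3] at key
  unfold entW
  linarith

lemma integral_log_wt_le_of_coupling
    {ν' : Measure (SpecialLinearGroup (Fin d) 𝕂)} [IsProbabilityMeasure ν']
    (h : Integrable logSize ν) (h' : Integrable logSize ν')
    {η : Measure (SpecialLinearGroup (Fin d) 𝕂 × SpecialLinearGroup (Fin d) 𝕂)}
    (hη1 : η.map Prod.fst = ν') (hη2 : η.map Prod.snd = ν) (hη : Integrable logDist η) :
    ∫ g, Real.log (wt 𝕂 d g) ∂ν' ≤
      ∫ g, Real.log (wt 𝕂 d g) ∂ν + 2 * d * ∫ q, logDist q ∂η := by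
  have m1 : MeasurePreserving Prod.fst η ν' := ⟨measurable_fst, hη1⟩
  have m2 : MeasurePreserving Prod.snd η ν := ⟨measurable_snd, hη2⟩
  have j1 := m1.integrable_comp_of_integrable (integrable_log_wt h')
  have j2 := m2.integrable_comp_of_integrable (integrable_log_wt h)
  have j3 := hη.const_mul (2 * (d : ℝ))
  have key := integral_mono j1 (j2.add j3) fun q => log_wt_le q.1 q.2
  rw [integral_add' j2 j3, integral_const_mul] at key
  rw [← hη1, ← hη2, integral_map m1.aemeasurable measurable_log_wt.aestronglyMeasurable,
    integral_map m2.aemeasurable measurable_log_wt.aestronglyMeasurable]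
  exact key

lemma integrable_logSize {ν : Measure (SpecialLinearGroup (Fin d) 𝕂)} {δ : ℝ} (hδ : δ ∈ Set.Ioo (0 : ℝ) 1) {s : ℝ → ℝ} (hs : IsSlog δ s)
    (h : MemPslog s ν) : Integrable logSize ν := by
  obtain ⟨C, hC, hCs⟩ := exists_log_le_slog hδ hs
  exact (integrable_of_le_mul hC measurable_logSize
    (fun g => Real.log_nonneg (by linarith [norm_nonneg (g : Matrix (Fin d) (Fin d) 𝕂)]))
    (fun g => hCs _ (norm_nonneg _)) h.2).1

/-- Convergence in the semi-logarithmic Wasserstein distance yields couplings along which the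
expected logarithmic distance is arbitrarily small. -/
lemma eventually_exists_coupling [SecondCountableTopology 𝕂] {δ : ℝ} (hδ : δ ∈ Set.Ioo (0 : ℝ) 1)
    {s : ℝ → ℝ} (hs : IsSlog δ s) (μ : Measure (SpecialLinearGroup (Fin d) 𝕂))
    (μseq : ℕ → Measure (SpecialLinearGroup (Fin d) 𝕂))
    (hconv : Tendsto (fun n => Wslog s (μseq n) μ) atTop (nhds 0)) {ε : ℝ} (hε : 0 < ε) :
    ∀ᶠ k in atTop, ∃ η : Measure (SpecialLinearGroup (Fin d) 𝕂 × SpecialLinearGroup (Fin d) 𝕂),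
      η.map Prod.fst = μseq k ∧ η.map Prod.snd = μ ∧ Integrable logDist η ∧
        ∫ q, logDist q ∂η < ε := by
  obtain ⟨C, hC, hCs⟩ := exists_log_le_slog hδ hs
  have hpos : (0 : ℝ≥0∞) < ENNReal.ofReal (ε / C) := ENNReal.ofReal_pos.2 (by positivity)
  filter_upwards [hconv.eventually_lt_const hpos] with k hk
  unfold Wslog transportCost at hk
  simp only [iInf_lt_iff] at hk
  obtain ⟨η, ⟨h1, h2⟩, hk⟩ := hk
  obtain ⟨hi, hle⟩ := integrable_of_le_mul (ν := η) hC measurable_logDist logDist_nonneg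
    (fun q => hCs _ (norm_nonneg _)) (hk.trans ENNReal.ofReal_lt_top)
  refine ⟨η, h1, h2, hi, hle.trans_lt ?_⟩
  have h3 := (ENNReal.toReal_lt_toReal hk.ne_top ENNReal.ofReal_ne_top).2 hk
  rw [ENNReal.toReal_ofReal (by positivity), lt_div_iff₀ hC] at h3
  linarith

/-- **Upper semi-continuity of `λ₁ + λ₂`** (Theorem 1.18 of the paper).
For every `δ ∈ (0,1)`, the map `μ ↦ λ₁(μ) + λ₂(μ)` is upper semi-continuous on
`(𝒫^δ_slog(SL_d(𝕂)), W^δ_slog)`. -/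
theorem lyap12_upper_semicontinuous {𝕂 : Type*} [NontriviallyNormedField 𝕂] [CompleteSpace 𝕂]
    [LocallyCompactSpace 𝕂] {d : ℕ} (hd : 2 ≤ d) {δ : ℝ} (hδ : δ ∈ Set.Ioo (0 : ℝ) 1)
    (s : ℝ → ℝ) (hs : IsSlog δ s)
    (μ : Measure (SpecialLinearGroup (Fin d) 𝕂)) (hμ : MemPslog s μ)
    (μseq : ℕ → Measure (SpecialLinearGroup (Fin d) 𝕂)) (hseq : ∀ n, MemPslog s (μseq n))
    (hconv : Tendsto (fun n => Wslog s (μseq n) μ) atTop (nhds 0)) :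
    limsup (fun n => lyap12 (μseq n)) atTop ≤ lyap12 μ := by
  have : ProperSpace 𝕂 := .of_locallyCompactSpace 𝕂
  have : SecondCountableTopology 𝕂 := secondCountable_of_proper
  have hμP : IsProbabilityMeasure μ := hμ.1
  have hkP : ∀ k, IsProbabilityMeasure (μseq k) := fun k => (hseq k).1
  have hμi : Integrable logSize μ := integrable_logSize hδ hs hμ
  have hki : ∀ k, Integrable logSize (μseq k) := fun k => integrable_logSize hδ hs (hseq k)
  have hηP : ∀ {k} {η : Measure (SpecialLinearGroup (Fin d) 𝕂 × SpecialLinearGroup (Fin d) 𝕂)},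
      η.map Prod.fst = μseq k → IsProbabilityMeasure η := fun {k η} h => by
    have : IsProbabilityMeasure (η.map Prod.fst) := h ▸ hkP k
    exact Measure.isProbabilityMeasure_of_map Prod.fst
  -- The exponents are eventually bounded below, so that the real `limsup` is not a junk value.
  have hbelow : ∀ᶠ k in atTop,
      -(∫ g, Real.log (wt 𝕂 d g) ∂μ + 2 * d * 1) ≤ lyap12 (μseq k) := by
    filter_upwards [eventually_exists_coupling hδ hs μ μseq hconv one_pos]
      with k ⟨η, h1, h2, hi, hlt⟩
    have b1 := integral_log_wt_le_of_coupling hμi (hki k) h1 h2 hi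
    have b2 := neg_integral_le_lyap12 hd (hki k)
    have : 2 * (d : ℝ) * ∫ q, logDist q ∂η ≤ 2 * d * 1 := by gcongr
    linarith
  have hcob : IsCoboundedUnder (· ≤ ·) atTop (fun k => lyap12 (μseq k)) :=
    (isBoundedUnder_of_eventually_ge hbelow).isCoboundedUnder_le
  refine le_of_forall_pos_le_add fun ε hε => limsup_le_of_le hcob ?_
  have hε3 : 0 < ε / 3 := by positivity
  obtain ⟨n, hn, hn0⟩ := (((tendsto_entW_div hd hμi).eventually_lt_const
    (lt_add_of_pos_right _ hε3)).and (eventually_ne_atTop 0)).exists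
  have hn1 : (1 : ℝ) ≤ n := by exact_mod_cast Nat.one_le_iff_ne_zero.2 hn0
  have hnpos : (0 : ℝ) < n := by linarith
  obtain ⟨K, hK⟩ := ((tendsto_tailY hd hμi n).eventually_lt_const hε3).exists
  set A : ℝ := (1 + Real.exp K) * (n * 2) with hA
  have hApos : 0 < A := by positivity
  filter_upwards [eventually_exists_coupling hδ hs μ μseq hconv (div_pos hε3 hApos)]
    with k ⟨η, h1, h2, hi, hlt⟩
  have := hηP h1
  have b1 := entW_le_of_coupling hd hμi (hki k) h1 h2 hi n K
  have b2 := lyap12_le_entW_div hd (hki k) hn0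
  rw [lt_div_iff₀ hApos] at hlt
  have b3 : entW (μseq k) n ≤ entW μ n + 2 * (ε / 3) := by
    have : (1 + Real.exp K) * (n * (2 * ∫ q, logDist q ∂η)) = (∫ q, logDist q ∂η) * A := by
      rw [hA]; ring
    linarith
  calc lyap12 (μseq k) ≤ entW (μseq k) n / n := b2
    _ ≤ (entW μ n + 2 * (ε / 3)) / n := by gcongr
    _ = entW μ n / n + 2 * (ε / 3) / n := add_div _ _ _
    _ ≤ entW μ n / n + 2 * (ε / 3) := by
        gcongr
        exact div_le_self (by positivity) hn1
    _ ≤ lyap12 μ + ε := by linarith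

end RMP

end
end

section
/- Let G be a topological group, X a compact metrizable G-space, and f ∈ C(X). Let K ⊂ 𝒫(G) be compact in the weak topology such that (i) K is tight, and (ii) f has a unique average with respect to every μ ∈ K. Then for every ε > 0 there exist constants C = C(K,f,ε) > 0 and c = c(K,f,ε) > 0 such that for every x ∈ X, every μ ∈ K and every n ≥ 1, P_{x,μ}[ |(1/n)·∑_{k=1}^n f(x_k) − ∫ f dν_μ| > ε ] ≤ C·e^{−cn}. -/
/-!
Let `P_μ φ (x) = ∫ φ(gx) dμ(g)` be the Markov operator on `C(X)`, and write
`A_N = (1/N) ∑_{k<N} P_μ^k`.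

Every weak limit of the empirical laws `φ ↦ A_N φ(x_N)` is `μ`-stationary and `𝒫(X)` is compact,
so uniqueness of the average makes `A_N f` uniformly close to a constant for some `N`, for each
`μ ∈ K` (`exists_cesaro_near_const`). Tightness makes the functions `P_μ φ`, `μ ∈ K`,
equicontinuous, hence `μ ↦ P_μ φ` and `μ ↦ A_N f` are continuous from `K` to `C(X)`; the same `N`
then works near `μ`, and finitely many `N` suffice on the compact set `K`.

The function `h = (1/N) ∑_{k<N} ∑_{i<k} P^i f` satisfies `h - P h = f - A_N f` and
`‖h‖ ≤ N ‖f‖`. Hence for every `μ ∈ K` the function `f - ∫ f dν_μ` is within `δ` of a coboundary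
`h - P h`, with `‖h‖ ≤ H` uniformly in `μ` (`exists_uniform_corrector`). Up to the error `n δ` and
boundary terms at most `2 H`, the Birkhoff sum is then a martingale with increments
`h(x_k) - P h(x_{k-1})`, whose exponential moments are controlled step by step by Hoeffding's lemma
(`lintegral_exp_birkhoff`). Chernoff's bound, applied to `f` and to `-f`, gives the estimate.
-/

open MeasureTheory Filter Topology
open scoped ENNReal

noncomputable section

namespace RMP

variable {G : Type*} [Group G] [TopologicalSpace G] [MeasurableSpace G]
variable {X : Type*} [TopologicalSpace X] [MeasurableSpace X] [MulAction G X]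

/-- The convolution `μ ∗ ν` of a measure `μ` on `G` with a measure `ν` on a `G`-space `X`. -/
def convAct (μ : Measure G) (ν : Measure X) : Measure X :=
  (μ.prod ν).map fun q => q.1 • q.2

/-- `ν` is a `μ`-stationary probability measure on `X`. -/
def IsStationaryMeasure (μ : Measure G) (ν : Measure X) : Prop :=
  IsProbabilityMeasure ν ∧ convAct μ ν = ν

/-- `f` has a unique average with respect to `μ`: all `μ`-stationary measures give `f` the
same integral. -/
def HasUniqueAverage (μ : Measure G) (f : X → ℝ) : Prop :=
  ∀ ν₁ ν₂ : Measure X, IsStationaryMeasure μ ν₁ → IsStationaryMeasure μ ν₂ →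
    ∫ x, f x ∂ν₁ = ∫ x, f x ∂ν₂

/-- The partial product `g_(k+1) ⋯ g_1` of the first `k+1` increments. -/
def pprod {n : ℕ} (ω : Fin n → G) (k : Fin n) : G :=
  ((List.ofFn ω).take (k + 1)).reverse.prod

/-! ### Orbits, trajectories and product measures -/

lemma pprod_zero {G : Type*} [Group G] {n : ℕ} (ω : Fin (n + 1) → G) : pprod ω 0 = ω 0 := by
  simp [pprod, List.ofFn_succ]

lemma pprod_succ {G : Type*} [Group G] {n : ℕ} (ω : Fin (n + 1) → G) (k : Fin n) :
    pprod ω k.succ = pprod (fun i => ω i.succ) k * ω 0 := by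
  simp [pprod, List.ofFn_succ]

lemma continuous_orbit {G : Type*} [Group G] [TopologicalSpace G]
    {X : Type*} [TopologicalSpace X] [MulAction G X] [ContinuousSMul G X] (φ : C(X, ℝ)) (x : X) :
    Continuous fun g : G => φ (g • x) :=
  φ.continuous.comp (continuous_id.smul continuous_const)

lemma integrable_orbit {G : Type*} [Group G] [TopologicalSpace G]
    [MeasurableSpace G] [OpensMeasurableSpace G] {X : Type*} [TopologicalSpace X] [CompactSpace X]
    [MulAction G X] [ContinuousSMul G X] (μ : Measure G) [IsProbabilityMeasure μ]
    (φ : C(X, ℝ)) (x : X) :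
    Integrable (fun g : G => φ (g • x)) μ :=
  Integrable.of_bound (continuous_orbit φ x).measurable.aestronglyMeasurable ‖φ‖
    (Eventually.of_forall fun g => φ.norm_coe_le_norm (g • x))

lemma lintegral_pi_succ {G : Type*} [MeasurableSpace G] (μ : Measure G)
    [IsProbabilityMeasure μ] {n : ℕ}
    {Φ : (Fin (n + 1) → G) → ℝ≥0∞} (hΦ : Measurable Φ) :
    ∫⁻ ω, Φ ω ∂(Measure.pi fun _ : Fin (n + 1) => μ) =
      ∫⁻ g, ∫⁻ ω, Φ (Fin.cons g ω) ∂(Measure.pi fun _ : Fin n => μ) ∂μ := by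
  have hp := (measurePreserving_piFinSuccAbove (fun _ : Fin (n + 1) => μ) 0).symm
  have hm : Measurable fun p => Φ ((MeasurableEquiv.piFinSuccAbove (fun _ => G) 0).symm p) :=
    hΦ.comp hp.measurable
  rw [← hp.lintegral_comp hΦ, lintegral_prod _ hm.aemeasurable]
  simp [MeasurableEquiv.piFinSuccAbove_symm_apply, Fin.insertNthEquiv]

lemma integrable_cont {X : Type*} [TopologicalSpace X] [CompactSpace X] [MeasurableSpace X]
    [BorelSpace X] (ν : Measure X) [IsFiniteMeasure ν] (φ : C(X, ℝ)) :
    Integrable φ ν :=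
  Integrable.of_bound φ.continuous.measurable.aestronglyMeasurable ‖φ‖
    (Eventually.of_forall fun x => φ.norm_coe_le_norm x)

/-! ### The Markov operator and stationary measures -/

section Aux

variable [OpensMeasurableSpace G] [CompactSpace X] [TopologicalSpace.MetrizableSpace X]
  [BorelSpace X] [ContinuousSMul G X]

/-- The action is measurable for the product σ-algebra, as `X` is second countable. -/
lemma measurable_act : Measurable fun q : G × X => q.1 • q.2 := by
  let := TopologicalSpace.metrizableSpaceMetric X
  exact (continuous_smul (M := G) (X := X)).measurable

/-- The Markov operator `(P φ)(x) = ∫ φ(gx) dμ(g)` on `C(X)`. -/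
def markovOp (μ : Measure G) [IsProbabilityMeasure μ] : C(X, ℝ) →ₗ[ℝ] C(X, ℝ) where
  toFun φ :=
    { toFun := fun x => ∫ g, φ (g • x) ∂μ
      continuous_toFun := by
        refine continuous_of_dominated (bound := fun _ => ‖φ‖)
          (fun x => (integrable_orbit μ φ x).aestronglyMeasurable)
          (fun x => Eventually.of_forall fun g => φ.norm_coe_le_norm (g • x))
          (integrable_const _) (Eventually.of_forall fun g => ?_)
        exact φ.continuous.comp (continuous_const_smul g) }
  map_add' φ ψ := by
    ext x
    exact integral_add (integrable_orbit μ φ x) (integrable_orbit μ ψ x)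
  map_smul' r φ := by
    ext x
    exact integral_const_mul r _

lemma markovOp_apply (μ : Measure G) [IsProbabilityMeasure μ] (φ : C(X, ℝ)) (x : X) :
    markovOp μ φ x = ∫ g, φ (g • x) ∂μ := rfl

lemma norm_markovOp_le (μ : Measure G) [IsProbabilityMeasure μ] (φ : C(X, ℝ)) :
    ‖markovOp μ φ‖ ≤ ‖φ‖ := by
  rw [ContinuousMap.norm_le _ (norm_nonneg _)]
  intro x
  rw [markovOp_apply]
  simpa using norm_integral_le_of_norm_le_const (μ := μ)
    (Eventually.of_forall fun g => φ.norm_coe_le_norm (g • x))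

lemma norm_markovOp_pow_le (μ : Measure G) [IsProbabilityMeasure μ] (k : ℕ) (φ : C(X, ℝ)) :
    ‖(markovOp μ ^ k) φ‖ ≤ ‖φ‖ := by
  induction k with
  | zero => simp
  | succ k ih =>
    rw [pow_succ']
    exact (norm_markovOp_le μ _).trans ih

/-- The Cesàro average `(1/N) ∑_{k<N} P^k` of the Markov operator. -/
def cesaro (μ : Measure G) [IsProbabilityMeasure μ] (N : ℕ) : C(X, ℝ) →ₗ[ℝ] C(X, ℝ) :=
  (N : ℝ)⁻¹ • ∑ k ∈ Finset.range N, markovOp μ ^ k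

lemma integral_convAct (μ : Measure G) [IsProbabilityMeasure μ] (ν : Measure X)
    [IsProbabilityMeasure ν] (φ : C(X, ℝ)) :
    ∫ x, φ x ∂(convAct μ ν) = ∫ x, markovOp μ φ x ∂ν := by
  have hm : Measurable fun q : G × X => q.1 • q.2 := measurable_act
  have hφ : Measurable φ := φ.continuous.measurable
  rw [convAct, integral_map hm.aemeasurable hφ.aestronglyMeasurable, integral_prod_symm]
  · rfl
  · exact Integrable.of_bound (hφ.comp hm).aestronglyMeasurable ‖φ‖
      (Eventually.of_forall fun q => φ.norm_coe_le_norm _)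

lemma isProbabilityMeasure_convAct (μ : Measure G) [IsProbabilityMeasure μ] (ν : Measure X)
    [IsProbabilityMeasure ν] : IsProbabilityMeasure (convAct μ ν) :=
  Measure.isProbabilityMeasure_map measurable_act.aemeasurable

lemma isStationary_of_integral (μ : Measure G) [IsProbabilityMeasure μ] (ν : Measure X)
    [IsProbabilityMeasure ν]
    (h : ∀ φ : C(X, ℝ), ∫ x, markovOp μ φ x ∂ν = ∫ x, φ x ∂ν) : IsStationaryMeasure μ ν := by
  refine ⟨inferInstance, ?_⟩
  have := isProbabilityMeasure_convAct μ ν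
  refine ext_of_forall_integral_eq_of_IsFiniteMeasure fun φ => ?_
  have := h φ.toContinuousMap
  rw [← integral_convAct] at this
  exact this

lemma integral_markovOp_of_stationary {μ : Measure G} [IsProbabilityMeasure μ] {ν : Measure X}
    (h : IsStationaryMeasure μ ν) (φ : C(X, ℝ)) :
    ∫ x, markovOp μ φ x ∂ν = ∫ x, φ x ∂ν := by
  have := h.1
  rw [← integral_convAct, h.2]

lemma integral_cesaro_of_stationary {μ : Measure G} [IsProbabilityMeasure μ] {ν : Measure X}
    (h : IsStationaryMeasure μ ν) (φ : C(X, ℝ)) {N : ℕ} (hN : N ≠ 0) :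
    ∫ x, cesaro μ N φ x ∂ν = ∫ x, φ x ∂ν := by
  have := h.1
  have hk : ∀ k : ℕ, ∫ x, (markovOp μ ^ k) φ x ∂ν = ∫ x, φ x ∂ν := by
    intro k
    induction k with
    | zero => simp
    | succ k ih =>
      rw [pow_succ', ← ih]
      exact integral_markovOp_of_stationary h _
  have : ∀ x, cesaro μ N φ x = (N : ℝ)⁻¹ * ∑ k ∈ Finset.range N, (markovOp μ ^ k) φ x := by
    intro x
    simp [cesaro]
  simp_rw [this]
  rw [integral_const_mul, integral_finsetSum _ fun k _ => integrable_cont ν _]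
  simp [hk, hN]

/-- The law of the `k`-th step of the chain started at `x`. -/
lemma exists_law (μ : Measure G) [IsProbabilityMeasure μ] (x : X) (k : ℕ) :
    ∃ m : Measure X, IsProbabilityMeasure m ∧
      ∀ φ : C(X, ℝ), ∫ y, φ y ∂m = (markovOp μ ^ k) φ x := by
  induction k with
  | zero => exact ⟨Measure.dirac x, inferInstance, fun φ => by simp⟩
  | succ k ih =>
    obtain ⟨m, hm, h⟩ := ih
    refine ⟨convAct μ m, isProbabilityMeasure_convAct μ m, fun φ => ?_⟩
    rw [integral_convAct, h, pow_succ]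
    rfl

/-- The Cesàro average of the laws of the first `N` steps of the chain started at `x`. -/
lemma exists_empirical (μ : Measure G) [IsProbabilityMeasure μ] (x : X) {N : ℕ} (hN : N ≠ 0) :
    ∃ m : ProbabilityMeasure X,
      ∀ φ : C(X, ℝ), ∫ y, φ y ∂(m : Measure X) = cesaro μ N φ x := by
  choose m hm h using exists_law μ x
  have hN' : (N : ℝ≥0∞) ≠ 0 := by exact_mod_cast hN
  refine ⟨⟨(N : ℝ≥0∞)⁻¹ • ∑ k ∈ Finset.range N, m k, ⟨?_⟩⟩, fun φ => ?_⟩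
  · simp [ENNReal.inv_mul_cancel hN' (ENNReal.natCast_ne_top N)]
  · simp only [ProbabilityMeasure.coe_mk]
    rw [integral_smul_measure, integral_finsetSum_measure fun k _ => integrable_cont (m k) φ]
    simp [cesaro, h]

lemma cesaro_markovOp_sub (μ : Measure G) [IsProbabilityMeasure μ] (N : ℕ) (φ : C(X, ℝ)) :
    ‖cesaro μ N (markovOp μ φ) - cesaro μ N φ‖ ≤ (N : ℝ)⁻¹ * (2 * ‖φ‖) := by
  have : cesaro μ N (markovOp μ φ) - cesaro μ N φ =
      (N : ℝ)⁻¹ • ((markovOp μ ^ N) φ - φ) := by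
    simp only [cesaro, LinearMap.smul_apply, LinearMap.sum_apply, ← smul_sub,
      ← Finset.sum_sub_distrib]
    congr 1
    have := Finset.sum_range_sub (fun k => (markovOp μ ^ k) φ) N
    simpa [pow_succ] using this
  rw [this, norm_smul, norm_inv, RCLike.norm_natCast]
  gcongr
  calc _ ≤ ‖(markovOp μ ^ N) φ‖ + ‖φ‖ := norm_sub_le _ _
    _ ≤ 2 * ‖φ‖ := by linarith [norm_markovOp_pow_le μ N φ]

/-- Along any ultrafilter finer than `atTop`, the empirical averages converge to the integrals
against a stationary measure. -/
lemma exists_stationary_limit (μ : Measure G) [IsProbabilityMeasure μ] (x : ℕ → X)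
    (U : Ultrafilter ℕ) (hU : (U : Filter ℕ) ≤ atTop) :
    ∃ ν : Measure X, IsStationaryMeasure μ ν ∧
      ∀ φ : C(X, ℝ), Tendsto (fun N => cesaro μ N φ (x N)) U (𝓝 (∫ y, φ y ∂ν)) := by
  have hne : ∀ᶠ N : ℕ in U, N ≠ 0 := hU (eventually_ne_atTop 0)
  obtain ⟨m, hm⟩ : ∃ m : ℕ → ProbabilityMeasure X, ∀ N, N ≠ 0 →
      ∀ φ : C(X, ℝ), ∫ y, φ y ∂(m N : Measure X) = cesaro μ N φ (x N) := by
    have : ∀ N, ∃ m : ProbabilityMeasure X, N ≠ 0 →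
      ∀ φ : C(X, ℝ), ∫ y, φ y ∂(m : Measure X) = cesaro μ N φ (x N) := by
      intro N
      by_cases hN : N = 0
      · exact ⟨⟨Measure.dirac (x 0), inferInstance⟩, fun h => (h hN).elim⟩
      · obtain ⟨m, hm⟩ := exists_empirical μ (x N) hN
        exact ⟨m, fun _ => hm⟩
    choose m hm using this
    exact ⟨m, hm⟩
  obtain ⟨ν, -, hν⟩ := isCompact_univ.ultrafilter_le_nhds (U.map m) (by simp)
  have hν' : Tendsto m U (𝓝 ν) := hν
  have hlim : ∀ φ : C(X, ℝ),
      Tendsto (fun N => cesaro μ N φ (x N)) U (𝓝 (∫ y, φ y ∂(ν : Measure X))) := by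
    intro φ
    have := ProbabilityMeasure.tendsto_iff_forall_integral_tendsto.1 hν'
      (BoundedContinuousFunction.mkOfCompact φ)
    refine this.congr' ?_
    filter_upwards [hne] with N hN
    exact hm N hN φ
  refine ⟨ν, isStationary_of_integral μ _ fun φ => ?_, hlim⟩
  have h1 := (hlim (markovOp μ φ)).sub (hlim φ)
  have h2 : Tendsto (fun N : ℕ => (N : ℝ)⁻¹ * (2 * ‖φ‖)) U (𝓝 0) := by
    simpa using ((tendsto_inv_atTop_nhds_zero_nat (𝕜 := ℝ)).mono_left hU).mul_const (2 * ‖φ‖)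
  have h3 : Tendsto (fun N => cesaro μ N (markovOp μ φ) (x N) - cesaro μ N φ (x N)) U (𝓝 0) := by
    refine squeeze_zero_norm (fun N => ?_) h2
    exact (ContinuousMap.norm_coe_le_norm
      (cesaro μ N (markovOp μ φ) - cesaro μ N φ) (x N)).trans (cesaro_markovOp_sub μ N φ)
  linarith [tendsto_nhds_unique h1 h3]

/-- For a single `μ`, uniqueness of the average forces uniform convergence of the averages. -/
lemma exists_cesaro_near_const [Nonempty X] (μ : Measure G) [IsProbabilityMeasure μ] (f : C(X, ℝ))
    (havg : HasUniqueAverage μ f) {δ : ℝ} (hδ : 0 < δ) :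
    ∃ c : ℝ, ∃ N : ℕ, N ≠ 0 ∧ ∀ x, |cesaro μ N f x - c| < δ := by
  obtain ⟨ν, hν, -⟩ := exists_stationary_limit μ (fun _ => Classical.arbitrary X)
    (Ultrafilter.of atTop) (Ultrafilter.of_le _)
  refine ⟨∫ y, f y ∂ν, ?_⟩
  by_contra! hcon
  have : ∀ N : ℕ, ∃ x, N ≠ 0 → δ ≤ |cesaro μ N f x - ∫ y, f y ∂ν| := by
    intro N
    by_cases hN : N = 0
    · exact ⟨Classical.arbitrary X, fun h => (h hN).elim⟩
    · obtain ⟨x, hx⟩ := hcon N hN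
      exact ⟨x, fun _ => hx⟩
  choose x hx using this
  have hU := Ultrafilter.of_le (atTop : Filter ℕ)
  obtain ⟨ν', hν', hlim⟩ := exists_stationary_limit μ x (Ultrafilter.of atTop) hU
  have hne : ∀ᶠ N : ℕ in ((Ultrafilter.of (atTop : Filter ℕ) : Ultrafilter ℕ) : Filter ℕ),
      N ≠ 0 := hU (eventually_ne_atTop 0)
  have h := ((hlim f).sub_const (∫ y, f y ∂ν)).abs
  rw [havg ν' ν hν' hν, sub_self, abs_zero] at h
  exact absurd (ge_of_tendsto h (hne.mono hx)) (not_le.2 hδ)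

/-! ### Continuity in `μ` -/

/-- Tightness of `K` makes the functions `P_μ φ`, `μ ∈ K`, equicontinuous. -/
lemma markovOp_equicontinuousAt {K : Set (ProbabilityMeasure G)}
    (htight : ∀ ε : ℝ, 0 < ε → ∃ Kc : Set G, IsCompact Kc ∧
      ∀ μ ∈ K, (μ : Measure G) Kcᶜ ≤ ENNReal.ofReal ε)
    (φ : C(X, ℝ)) (x₀ : X) {η : ℝ} (hη : 0 < η) :
    ∃ V ∈ 𝓝 x₀, ∀ μ ∈ K, ∀ x ∈ V,
      |markovOp (μ : Measure G) φ x - markovOp (μ : Measure G) φ x₀| ≤ η := by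
  have hφ0 := norm_nonneg φ
  obtain ⟨Kc, hKc, hKμ⟩ := htight (η / (4 * (‖φ‖ + 1))) (by positivity)
  have hcont : Continuous fun q : G × X => |φ (q.1 • q.2) - φ (q.1 • x₀)| := by fun_prop
  obtain ⟨U, V, hU, hV, hKU, hxV, hUV⟩ := generalized_tube_lemma hKc
    (isCompact_singleton (x := x₀)) (isOpen_lt hcont (continuous_const (y := η / 2)))
    (by rintro ⟨g, y⟩ ⟨-, rfl⟩; simpa using hη)
  refine ⟨V, hV.mem_nhds (hxV rfl), fun μ hμ x hx => ?_⟩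
  -- The compact set need not be measurable, so the mass is split along its open
  -- neighbourhood `U`.
  have hUc : (μ : Measure G).real Uᶜ ≤ η / (4 * (‖φ‖ + 1)) := by
    refine ENNReal.toReal_le_of_le_ofReal (by positivity) (le_trans ?_ (hKμ μ hμ))
    exact measure_mono (Set.compl_subset_compl.2 hKU)
  have hpt : ∀ g : G, |φ (g • x) - φ (g • x₀)| ≤ η / 2 + Uᶜ.indicator (fun _ => 2 * ‖φ‖) g := by
    intro g
    by_cases hg : g ∈ U
    · have := hUV (Set.mk_mem_prod hg hx)
      simp only [Set.mem_ofPred_eq] at this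
      simp [hg, this.le]
    · have h1 := φ.norm_coe_le_norm (g • x)
      have h2 := φ.norm_coe_le_norm (g • x₀)
      have h3 := norm_sub_le (φ (g • x)) (φ (g • x₀))
      simp only [Real.norm_eq_abs] at h1 h2 h3
      simp only [Set.mem_compl_iff, hg, not_false_eq_true, Set.indicator_of_mem]
      linarith
  have hint : Integrable (Uᶜ.indicator fun _ => 2 * ‖φ‖) (μ : Measure G) :=
    (integrable_const _).indicator hU.measurableSet.compl
  calc |markovOp (μ : Measure G) φ x - markovOp (μ : Measure G) φ x₀|
      = |∫ g, (φ (g • x) - φ (g • x₀)) ∂(μ : Measure G)| := by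
        rw [integral_sub (integrable_orbit _ φ x) (integrable_orbit _ φ x₀)]
        rfl
    _ ≤ ∫ g, |φ (g • x) - φ (g • x₀)| ∂(μ : Measure G) := abs_integral_le_integral_abs
    _ ≤ ∫ g, (η / 2 + Uᶜ.indicator (fun _ => 2 * ‖φ‖) g) ∂(μ : Measure G) :=
        integral_mono ((integrable_orbit _ φ x).sub (integrable_orbit _ φ x₀)).abs
          ((integrable_const _).add hint) hpt
    _ = η / 2 + (μ : Measure G).real Uᶜ * (2 * ‖φ‖) := by
        rw [integral_add (integrable_const _) hint, integral_indicator hU.measurableSet.compl]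
        simp
    _ ≤ η / 2 + η / (4 * (‖φ‖ + 1)) * (2 * ‖φ‖) := by gcongr
    _ ≤ η := by
        have : η / (4 * (‖φ‖ + 1)) * (2 * ‖φ‖) = η / 2 * (‖φ‖ / (‖φ‖ + 1)) := by
          field_simp; ring
        have h1 : ‖φ‖ / (‖φ‖ + 1) ≤ 1 := (div_le_one (by positivity)).2 (by linarith)
        rw [this]
        nlinarith

/-- On a tight set, `μ ↦ P_μ φ` is continuous for the uniform norm: equicontinuity upgrades
pointwise to uniform convergence. -/
lemma markovOp_tendsto {K : Set (ProbabilityMeasure G)}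
    (htight : ∀ ε : ℝ, 0 < ε → ∃ Kc : Set G, IsCompact Kc ∧
      ∀ μ ∈ K, (μ : Measure G) Kcᶜ ≤ ENNReal.ofReal ε)
    {μ₀ : ProbabilityMeasure G} (hμ₀ : μ₀ ∈ K) (φ : C(X, ℝ)) :
    Tendsto (fun μ : ProbabilityMeasure G => markovOp (μ : Measure G) φ) (𝓝[K] μ₀)
      (𝓝 (markovOp (μ₀ : Measure G) φ)) := by
  rw [Metric.tendsto_nhds]
  intro η hη
  choose V hV hVK using fun x₀ : X =>
    markovOp_equicontinuousAt htight φ x₀ (η := η / 4) (by positivity)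
  obtain ⟨t, -, ht⟩ := isCompact_univ.elim_nhds_subcover V fun x _ => hV x
  have hpt : ∀ x ∈ t, ∀ᶠ μ : ProbabilityMeasure G in 𝓝[K] μ₀,
      |markovOp (μ : Measure G) φ x - markovOp (μ₀ : Measure G) φ x| < η / 4 := by
    intro x _
    have h := ProbabilityMeasure.tendsto_iff_forall_integral_tendsto.1
      (tendsto_id (x := 𝓝 μ₀)) (BoundedContinuousFunction.ofNormedAddCommGroup
        (fun g : G => φ (g • x)) (continuous_orbit φ x) ‖φ‖ fun g => φ.norm_coe_le_norm _)
    have h2 := Metric.tendsto_nhds.1 (h.mono_left (nhdsWithin_le_nhds (s := K))) (η / 4)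
      (by positivity)
    exact h2
  filter_upwards [(eventually_all_finset t).2 hpt, self_mem_nhdsWithin] with μ hμ hμK
  rw [dist_eq_norm]
  refine lt_of_le_of_lt ((ContinuousMap.norm_le _ (by positivity : 0 ≤ 3 * (η / 4))).2 ?_)
    (by linarith)
  intro y
  obtain ⟨x, hx, hyx⟩ := Set.mem_iUnion₂.1 (ht (Set.mem_univ y))
  have h1 := hVK x μ hμK y hyx
  have h2 := hVK x μ₀ hμ₀ y hyx
  have h3 := hμ x hx
  rw [abs_le] at h1 h2
  rw [abs_lt] at h3
  rw [ContinuousMap.sub_apply, Real.norm_eq_abs, abs_le]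
  constructor <;> linarith

lemma markovOp_pow_tendsto {K : Set (ProbabilityMeasure G)}
    (htight : ∀ ε : ℝ, 0 < ε → ∃ Kc : Set G, IsCompact Kc ∧
      ∀ μ ∈ K, (μ : Measure G) Kcᶜ ≤ ENNReal.ofReal ε)
    {μ₀ : ProbabilityMeasure G} (hμ₀ : μ₀ ∈ K) (φ : C(X, ℝ)) (k : ℕ) :
    Tendsto (fun μ : ProbabilityMeasure G => (markovOp (μ : Measure G) ^ k) φ) (𝓝[K] μ₀)
      (𝓝 ((markovOp (μ₀ : Measure G) ^ k) φ)) := by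
  induction k with
  | zero => simpa using tendsto_const_nhds
  | succ k ih =>
    simp only [pow_succ']
    have h1 := markovOp_tendsto htight hμ₀ ((markovOp (μ₀ : Measure G) ^ k) φ)
    rw [tendsto_iff_norm_sub_tendsto_zero] at ih h1 ⊢
    refine squeeze_zero (fun _ => norm_nonneg _) (fun μ => ?_) (by simpa using ih.add h1)
    have h2 := norm_markovOp_le (μ : Measure G)
      ((markovOp (μ : Measure G) ^ k) φ - (markovOp (μ₀ : Measure G) ^ k) φ)
    rw [map_sub] at h2
    refine (norm_sub_le_norm_sub_add_norm_sub _
      (markovOp (μ : Measure G) ((markovOp (μ₀ : Measure G) ^ k) φ)) _).trans ?_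
    exact add_le_add h2 le_rfl

lemma cesaro_tendsto {K : Set (ProbabilityMeasure G)}
    (htight : ∀ ε : ℝ, 0 < ε → ∃ Kc : Set G, IsCompact Kc ∧
      ∀ μ ∈ K, (μ : Measure G) Kcᶜ ≤ ENNReal.ofReal ε)
    {μ₀ : ProbabilityMeasure G} (hμ₀ : μ₀ ∈ K) (φ : C(X, ℝ)) (N : ℕ) :
    Tendsto (fun μ : ProbabilityMeasure G => cesaro (μ : Measure G) N φ) (𝓝[K] μ₀)
      (𝓝 (cesaro (μ₀ : Measure G) N φ)) := by
  simp only [cesaro, LinearMap.smul_apply, LinearMap.sum_apply]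
  exact (tendsto_finsetSum _ fun k _ => markovOp_pow_tendsto htight hμ₀ φ k).const_smul _

/-! ### Uniformly bounded correctors -/

/-- The approximate Poisson equation: `h = (1/N) ∑_{k<N} ∑_{i<k} P^i f` solves
`h - P h = f - (1/N) ∑_{k<N} P^k f`. -/
lemma exists_corrector (μ : Measure G) [IsProbabilityMeasure μ] (f : C(X, ℝ)) {N : ℕ}
    (hN : N ≠ 0) :
    ∃ h : C(X, ℝ), ‖h‖ ≤ N * ‖f‖ ∧ h - markovOp μ h = f - cesaro μ N f := by
  have hN' : (N : ℝ) ≠ 0 := by exact_mod_cast hN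
  refine ⟨(N : ℝ)⁻¹ • ∑ k ∈ Finset.range N, ∑ i ∈ Finset.range k, (markovOp μ ^ i) f, ?_, ?_⟩
  · rw [norm_smul, norm_inv, RCLike.norm_natCast]
    have : ‖∑ k ∈ Finset.range N, ∑ i ∈ Finset.range k, (markovOp μ ^ i) f‖
        ≤ ∑ k ∈ Finset.range N, (N : ℝ) * ‖f‖ := by
      refine norm_sum_le_of_le _ fun k hk => ?_
      refine (norm_sum_le_of_le _ fun i _ => norm_markovOp_pow_le μ i f).trans ?_
      simp only [Finset.sum_const, Finset.card_range, nsmul_eq_mul]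
      gcongr
      exact (Finset.mem_range.1 hk).le
    calc _ ≤ (N : ℝ)⁻¹ * ∑ k ∈ Finset.range N, (N : ℝ) * ‖f‖ := by gcongr
      _ = N * ‖f‖ := by
        simp only [Finset.sum_const, Finset.card_range, nsmul_eq_mul]
        field_simp
  · have hk : ∀ k : ℕ, ∑ i ∈ Finset.range k, (markovOp μ ^ i) f
        - markovOp μ (∑ i ∈ Finset.range k, (markovOp μ ^ i) f) = f - (markovOp μ ^ k) f := by
      intro k
      have := Finset.sum_range_sub' (fun i => (markovOp μ ^ i) f) k
      simpa [pow_succ', map_sum, Finset.sum_sub_distrib] using this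
    rw [map_smul, map_sum, ← smul_sub, ← Finset.sum_sub_distrib]
    simp only [hk, Finset.sum_sub_distrib, smul_sub, cesaro, LinearMap.smul_apply,
      LinearMap.sum_apply]
    congr 1
    ext x
    simp [hN']

/-- Correctors that solve the Poisson equation up to `δ`, bounded uniformly over `μ ∈ K`. -/
lemma exists_uniform_corrector [Nonempty X] {K : Set (ProbabilityMeasure G)} (hK : IsCompact K)
    (htight : ∀ ε : ℝ, 0 < ε → ∃ Kc : Set G, IsCompact Kc ∧
      ∀ μ ∈ K, (μ : Measure G) Kcᶜ ≤ ENNReal.ofReal ε)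
    (f : C(X, ℝ)) (havg : ∀ μ ∈ K, HasUniqueAverage (μ : Measure G) f) {δ : ℝ} (hδ : 0 < δ) :
    ∃ H : ℝ, ∀ μ ∈ K, ∃ h : C(X, ℝ), ‖h‖ ≤ H ∧
      ∀ ν : Measure X, IsStationaryMeasure (μ : Measure G) ν → ∀ x,
        |f x - ∫ y, f y ∂ν - (h x - markovOp (μ : Measure G) h x)| ≤ δ := by
  refine hK.induction_on (p := fun S => ∃ H : ℝ, ∀ μ ∈ S, ∃ h : C(X, ℝ), ‖h‖ ≤ H ∧
      ∀ ν : Measure X, IsStationaryMeasure (μ : Measure G) ν → ∀ x,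
        |f x - ∫ y, f y ∂ν - (h x - markovOp (μ : Measure G) h x)| ≤ δ)
    ⟨0, by simp⟩ ?_ ?_ ?_
  · rintro s t hst ⟨H, hH⟩
    exact ⟨H, fun μ hμ => hH μ (hst hμ)⟩
  · rintro s t ⟨H₁, h₁⟩ ⟨H₂, h₂⟩
    refine ⟨max H₁ H₂, fun μ hμ => ?_⟩
    rcases hμ with hμ | hμ
    · obtain ⟨h, hh, h'⟩ := h₁ μ hμ
      exact ⟨h, hh.trans (le_max_left _ _), h'⟩
    · obtain ⟨h, hh, h'⟩ := h₂ μ hμ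
      exact ⟨h, hh.trans (le_max_right _ _), h'⟩
  · intro μ₀ hμ₀
    obtain ⟨c, N, hN, hc⟩ := exists_cesaro_near_const (μ₀ : Measure G) f (havg μ₀ hμ₀)
      (δ := δ / 4) (by positivity)
    have hev := Metric.tendsto_nhds.1 (cesaro_tendsto htight hμ₀ f N) (δ / 4) (by positivity)
    refine ⟨_, hev, N * ‖f‖, fun μ hμ => ?_⟩
    obtain ⟨h, hh, hP⟩ := exists_corrector (μ : Measure G) f hN
    refine ⟨h, hh, fun ν hν x => ?_⟩
    have hprob := hν.1
    have hclose : ∀ y, |cesaro (μ : Measure G) N f y - c| ≤ δ / 2 := by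
      intro y
      have h1 := (ContinuousMap.norm_coe_le_norm
        (cesaro (μ : Measure G) N f - cesaro (μ₀ : Measure G) N f) y).trans_lt
          (by rw [← dist_eq_norm]; exact hμ)
      have h2 := hc y
      rw [ContinuousMap.sub_apply, Real.norm_eq_abs, abs_lt] at h1
      rw [abs_lt] at h2
      rw [abs_le]
      constructor <;> linarith
    -- Integrating the bound against `ν` shows that the average of `f` is itself close to `c`.
    have hmean : |∫ y, f y ∂ν - c| ≤ δ / 2 := by
      rw [← integral_cesaro_of_stationary hν f hN]
      have : ∫ y, cesaro (μ : Measure G) N f y ∂ν - c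
          = ∫ y, (cesaro (μ : Measure G) N f y - c) ∂ν := by
        rw [integral_sub (integrable_cont ν _) (integrable_const _)]
        simp
      rw [this]
      simpa using norm_integral_le_of_norm_le_const (μ := ν)
        (f := fun y => cesaro (μ : Measure G) N f y - c) (Eventually.of_forall hclose)
    have hPx : h x - markovOp (μ : Measure G) h x = f x - cesaro (μ : Measure G) N f x :=
      congrArg (fun ψ : C(X, ℝ) => ψ x) hP
    have h3 := hclose x
    rw [hPx]
    rw [abs_le] at h3 hmean ⊢
    constructor <;> linarith

/-! ### Exponential moments of Birkhoff sums -/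

/-- Joint measurability in the starting point and the increments. It is obtained from the action
map alone, since multiplication on `G` need not be measurable. -/
lemma measurable_traj {n : ℕ} (k : Fin n) :
    Measurable fun p : X × (Fin n → G) => pprod p.2 k • p.1 := by
  induction n with
  | zero => exact k.elim0
  | succ n ih =>
    have h0 : Measurable fun p : X × (Fin (n + 1) → G) => p.2 0 • p.1 :=
      measurable_act.comp (((measurable_pi_apply 0).comp measurable_snd).prodMk measurable_fst)
    refine Fin.cases ?_ (fun k => ?_) k
    · simpa only [pprod_zero] using h0
    · simp only [pprod_succ, mul_smul]
      exact (ih k).comp (h0.prodMk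
        (measurable_pi_lambda _ fun i => (measurable_pi_apply i.succ).comp measurable_snd))

lemma measurable_birkhoff (F : C(X, ℝ)) (n : ℕ) (t : ℝ) (x : X) :
    Measurable fun ω : Fin n → G =>
      ENNReal.ofReal (Real.exp (t * ∑ k, F (pprod ω k • x))) := by
  refine ENNReal.measurable_ofReal.comp (Real.measurable_exp.comp (Measurable.const_mul ?_ t))
  exact Finset.measurable_sum _ fun k _ =>
    F.continuous.measurable.comp ((measurable_traj k).comp measurable_prodMk_left)

/-- Hoeffding's lemma for one step of the chain. -/
lemma lintegral_exp_step (μ : Measure G) [IsProbabilityMeasure μ] (h : C(X, ℝ)) {H : ℝ}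
    (hH : ‖h‖ ≤ H) (t : ℝ) (x : X) :
    ∫⁻ g, ENNReal.ofReal (Real.exp (t * h (g • x))) ∂μ
      ≤ ENNReal.ofReal (Real.exp (t * markovOp μ h x + H ^ 2 * t ^ 2 / 2)) := by
  have hm : AEMeasurable (fun g : G => h (g • x)) μ := (integrable_orbit μ h x).aemeasurable
  have hb : ∀ᵐ g ∂μ, h (g • x) ∈ Set.Icc (-H) H := Eventually.of_forall fun g => by
    have := (h.norm_coe_le_norm (g • x)).trans hH
    rwa [Real.norm_eq_abs, abs_le] at this
  have hsub := ProbabilityTheory.hasSubgaussianMGF_of_mem_Icc hm hb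
  have hle := hsub.mgf_le t
  have hint := hsub.integrable_exp_mul t
  have hc : (((‖H - -H‖₊ / 2) ^ 2 : NNReal) : ℝ) = H ^ 2 := by
    simp only [NNReal.coe_pow, NNReal.coe_div, coe_nnnorm, Real.norm_eq_abs, NNReal.coe_ofNat,
      div_pow, sq_abs]
    ring
  rw [hc, ProbabilityTheory.mgf] at hle
  have hfun : ∀ g : G, Real.exp (t * h (g • x)) = Real.exp (t * markovOp μ h x) *
      Real.exp (t * (h (g • x) - ∫ g, h (g • x) ∂μ)) := by
    intro g
    rw [← Real.exp_add, markovOp_apply]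
    ring_nf
  simp only [hfun]
  rw [← ofReal_integral_eq_lintegral_ofReal (hint.const_mul _)
    (Eventually.of_forall fun g => by positivity), integral_const_mul, Real.exp_add]
  gcongr

/-- The exponential moment of the Birkhoff sum of `F ≤ δ + h - P h`. Conditioning on the first
increment, the term `P h(gx)` in the inductive bound cancels that of `F(gx)`, and `h(gx)` is
integrated by Hoeffding's lemma. -/
lemma lintegral_exp_birkhoff (μ : Measure G) [IsProbabilityMeasure μ] (F h : C(X, ℝ)) {H δ t : ℝ}
    (hH : ‖h‖ ≤ H) (ht : 0 ≤ t) (hF : ∀ x, F x ≤ δ + (h x - markovOp μ h x)) (n : ℕ) (x : X) :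
    ∫⁻ ω, ENNReal.ofReal (Real.exp (t * ∑ k, F (pprod ω k • x)))
        ∂(Measure.pi fun _ : Fin n => μ)
      ≤ ENNReal.ofReal (Real.exp
          (n * (t * δ + H ^ 2 * t ^ 2 / 2) + t * (H + markovOp μ h x))) := by
  induction n generalizing x with
  | zero =>
    have h1 := ((markovOp μ h).norm_coe_le_norm x).trans ((norm_markovOp_le μ h).trans hH)
    rw [Real.norm_eq_abs, abs_le] at h1
    have h2 : 0 ≤ t * (H + markovOp μ h x) := mul_nonneg ht (by linarith)
    simpa using h2
  | succ n ih =>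
    rw [lintegral_pi_succ μ (measurable_birkhoff F (n + 1) t x)]
    simp only [Fin.sum_univ_succ, pprod_zero, pprod_succ, Fin.cons_zero, Fin.cons_succ, mul_add,
      Real.exp_add, mul_smul]
    calc ∫⁻ g, ∫⁻ ω, ENNReal.ofReal (Real.exp (t * F (g • x)) *
            Real.exp (t * ∑ k, F (pprod ω k • g • x))) ∂(Measure.pi fun _ : Fin n => μ) ∂μ
        = ∫⁻ g, ENNReal.ofReal (Real.exp (t * F (g • x))) *
            ∫⁻ ω, ENNReal.ofReal (Real.exp (t * ∑ k, F (pprod ω k • g • x)))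
              ∂(Measure.pi fun _ : Fin n => μ) ∂μ := by
          refine lintegral_congr fun g => ?_
          rw [← lintegral_const_mul _ (measurable_birkhoff F n t (g • x))]
          exact lintegral_congr fun ω => ENNReal.ofReal_mul (Real.exp_nonneg _)
      _ ≤ ∫⁻ g, ENNReal.ofReal (Real.exp
            (n * (t * δ + H ^ 2 * t ^ 2 / 2) + t * (H + δ))) *
            ENNReal.ofReal (Real.exp (t * h (g • x))) ∂μ := by
          refine lintegral_mono fun g => ?_
          refine (mul_le_mul_right (ih (g • x)) _).trans ?_
          rw [← ENNReal.ofReal_mul (Real.exp_nonneg _), ← ENNReal.ofReal_mul (Real.exp_nonneg _),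
            ← Real.exp_add, ← Real.exp_add]
          refine ENNReal.ofReal_le_ofReal (Real.exp_le_exp.2 ?_)
          have := mul_le_mul_of_nonneg_left (hF (g • x)) ht
          linarith
      _ ≤ ENNReal.ofReal (Real.exp (n * (t * δ + H ^ 2 * t ^ 2 / 2) + t * (H + δ))) *
            ENNReal.ofReal (Real.exp (t * markovOp μ h x + H ^ 2 * t ^ 2 / 2)) := by
          rw [lintegral_const_mul' _ _ ENNReal.ofReal_ne_top]
          gcongr
          exact lintegral_exp_step μ h hH t x
      _ = _ := by
          rw [← ENNReal.ofReal_mul (Real.exp_nonneg _)]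
          simp only [← Real.exp_add]
          congr 2
          push_cast
          ring

/-- The one-sided deviation estimate, by Chernoff's bound. -/
lemma measure_birkhoff_gt_le (μ : Measure G) [IsProbabilityMeasure μ] (F h : C(X, ℝ)) {H ε : ℝ}
    (hH : ‖h‖ ≤ H) (hH0 : 0 < H) (hε : 0 < ε)
    (hF : ∀ x, F x ≤ ε / 2 + (h x - markovOp μ h x)) (n : ℕ) (x : X) :
    (Measure.pi fun _ : Fin n => μ) {ω | (n : ℝ) * ε < ∑ k, F (pprod ω k • x)}
      ≤ ENNReal.ofReal (Real.exp (ε / H) * Real.exp (-(ε ^ 2 / (8 * H ^ 2)) * n)) := by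
  -- `t` minimizes `H² t² / 2 - t ε / 2`, the exponential rate in Chernoff's bound.
  set t : ℝ := ε / (2 * H ^ 2) with htdef
  have ht : 0 < t := by positivity
  have hmeas : Measurable fun ω : Fin n → G =>
      ENNReal.ofReal (Real.exp (t * (∑ k, F (pprod ω k • x)) - t * (n * ε))) := by
    simp only [sub_eq_add_neg, Real.exp_add, ENNReal.ofReal_mul (Real.exp_nonneg _)]
    exact (measurable_birkhoff F n t x).mul_const _
  refine (meas_le_lintegral₀ hmeas.aemeasurable fun ω hω => ?_).trans ?_
  · rw [ENNReal.one_le_ofReal, Real.one_le_exp_iff]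
    have := mul_le_mul_of_nonneg_left (le_of_lt (Set.mem_ofPred_eq ▸ hω)) ht.le
    linarith
  · simp only [sub_eq_add_neg, Real.exp_add, ENNReal.ofReal_mul (Real.exp_nonneg _)]
    rw [lintegral_mul_const _ (measurable_birkhoff F n t x)]
    refine (mul_le_mul_left (lintegral_exp_birkhoff μ F h hH ht.le hF n x) _).trans ?_
    rw [← ENNReal.ofReal_mul (Real.exp_nonneg _), ← ENNReal.ofReal_mul (Real.exp_nonneg _),
      ← Real.exp_add, ← Real.exp_add]
    refine ENNReal.ofReal_le_ofReal (Real.exp_le_exp.2 ?_)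
    have h1 := ((markovOp μ h).norm_coe_le_norm x).trans ((norm_markovOp_le μ h).trans hH)
    rw [Real.norm_eq_abs, abs_le] at h1
    have h2 : t * (H + markovOp μ h x) ≤ t * (2 * H) := by gcongr; linarith
    have h3 : t * (2 * H) = ε / H := by rw [htdef]; field_simp
    have h4 : n * (t * (ε / 2) + H ^ 2 * t ^ 2 / 2) + -(t * (n * ε))
        = -(ε ^ 2 / (8 * H ^ 2)) * n := by
      rw [htdef]; field_simp; ring
    linarith

end Aux

/-- **Uniform large deviations for Breiman's law of large numbers** (Lemma 3.7 of the paper).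
Let `G` be a topological group, `X` a compact metrizable `G`-space and `f ∈ C(X)`. If
`K ⊂ 𝒫(G)` is compact in the weak topology, tight, and `f` has a unique average with respect
to every `μ ∈ K`, then for every `ε > 0` there are `C, c > 0` such that for every starting
point `x ∈ X`, every `μ ∈ K` and every `n ≥ 1`,
`P_(x,μ)[ |(1/n) ∑_(k=1)^n f(x_k) - ∫ f dν_μ| > ε ] ≤ C e^(-cn)`. -/
theorem uniform_breiman_lde {G : Type*} [Group G] [TopologicalSpace G]
    [MeasurableSpace G] [OpensMeasurableSpace G]
    {X : Type*} [TopologicalSpace X] [CompactSpace X]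
    [TopologicalSpace.MetrizableSpace X] [MeasurableSpace X] [BorelSpace X]
    [MulAction G X] [ContinuousSMul G X]
    (f : X → ℝ) (hf : Continuous f)
    (K : Set (ProbabilityMeasure G)) (hK : IsCompact K)
    (htight : ∀ ε : ℝ, 0 < ε → ∃ Kc : Set G, IsCompact Kc ∧
      ∀ μ ∈ K, (μ : Measure G) Kcᶜ ≤ ENNReal.ofReal ε)
    (havg : ∀ μ ∈ K, HasUniqueAverage (μ : Measure G) f)
    {ε : ℝ} (hε : 0 < ε) :
    ∃ C > (0 : ℝ), ∃ c > (0 : ℝ), ∀ x : X, ∀ μ ∈ K,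
      ∀ ν : Measure X, IsStationaryMeasure (μ : Measure G) ν →
        ∀ n : ℕ, 1 ≤ n →
          (Measure.pi fun _ : Fin n => (μ : Measure G))
            {ω | (n : ℝ) * ε <
              |(∑ k : Fin n, f (pprod ω k • x)) - (n : ℝ) * ∫ y, f y ∂ν|}
            ≤ ENNReal.ofReal (C * Real.exp (-c * (n : ℝ))) := by
  rcases isEmpty_or_nonempty X with hX | hX
  · exact ⟨1, one_pos, 1, one_pos, fun x => (hX.false x).elim⟩
  set f' : C(X, ℝ) := ⟨f, hf⟩ with hf'
  obtain ⟨H₀, hH₀⟩ := exists_uniform_corrector hK htight f' havg (half_pos hε)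
  set H : ℝ := max H₀ 1
  have hH0 : 0 < H := lt_max_of_lt_right one_pos
  refine ⟨2 * Real.exp (ε / H), by positivity, ε ^ 2 / (8 * H ^ 2), by positivity,
    fun x μ hμ ν hν n _ => ?_⟩
  obtain ⟨h, hh, hP⟩ := hH₀ μ hμ
  have hhH : ‖h‖ ≤ H := hh.trans (le_max_left _ _)
  set ℓ : ℝ := ∫ y, f y ∂ν with hℓ
  let F : C(X, ℝ) := f' - ContinuousMap.const X ℓ
  have hPF : ∀ y, |F y - (h y - markovOp (μ : Measure G) h y)| ≤ ε / 2 := fun y => hP ν hν y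
  have h1 := measure_birkhoff_gt_le (μ : Measure G) F h hhH hH0 hε
    (fun y => by linarith [(abs_le.1 (hPF y)).2]) n x
  have h2 := measure_birkhoff_gt_le (μ : Measure G) (-F) (-h) (by rwa [norm_neg]) hH0 hε
    (fun y => by
      simp only [map_neg, ContinuousMap.neg_apply]
      linarith [(abs_le.1 (hPF y)).1]) n x
  have hsum : ∀ ω : Fin n → G, ∑ k, F (pprod ω k • x) = (∑ k, f (pprod ω k • x)) - n * ℓ := by
    intro ω
    have : ∀ y, F y = f y - ℓ := fun _ => rfl
    simp [this]
  calc _ ≤ (Measure.pi fun _ : Fin n => (μ : Measure G))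
        ({ω | (n : ℝ) * ε < ∑ k, F (pprod ω k • x)} ∪
          {ω | (n : ℝ) * ε < ∑ k, (-F) (pprod ω k • x)}) := by
        refine measure_mono fun ω hω => ?_
        simp only [Set.mem_ofPred_eq, ← hsum, lt_abs] at hω
        simpa using hω
    _ ≤ _ := (measure_union_le _ _).trans (add_le_add h1 h2)
    _ = _ := by
        rw [← ENNReal.ofReal_add (by positivity) (by positivity)]
        congr 1
        ring

end RMP

end
end
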